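/- arXiv:1902.09146 — 2 statements merged into one kernel-verified Lean document; each statement's English description precedes it below -/
import Mathlib

section
/- Let f ∈ ℂ[x_0,x_1,x_2]_4 be a homogeneous quartic such that the plane curve V(f) ⊂ ℙ^2 is smooth. Then the Milnor algebra M(f) = R/J(f) has the Strong Lefschetz Property. -/
/-!
Write `A = R ⧸ J(f)`. The partial derivatives `f₀, f₁, f₂` are cubics without common zero, so by the
Nullstellensatz `J(f)` contains powers of the variables (`exists_powIn`), and the Koszul complex of
the `fᵢ` is exact (`PowIn.syz`, `PowIn.parallel`). It suffices to find a linear form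
`L = z - a x - b y` such that `L^(6-2i) : A_i → A_{6-i}` is bijective for `i = 0, 1, 2`
(`hasSLPQuot_of_iso`). Each of these holds for `(a, b)` outside a proper closed subset.

*The case `i = 2`* (`lefschetz_two_point`). By a dimension count and specialization it is enough to
prove injectivity for the generic line over `K = ℂ(a, b)`, a field with the derivations `∂ₐ`, `∂_b`
(`GenericLine.lefschetz_two`). Let `x (B₁·f) + y (B₂·f) + L (B₃·f) = L² q` with `Bᵢ ∈ K³`.
Restriction to the line `L = 0` turns `(B₁, B₂)` into a linear syzygy of the three restricted
cubics, which is unique up to scaling (`GenericLine.linear_syz_unique`). Differentiating the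
relation with respect to `a` and `b` gives further linear syzygies, hence
`∂ₐB₁ = c B₁ + B₃`, `∂ₐB₂ = c B₂`, `∂_bB₁ = e B₁`, `∂_bB₂ = e B₂ + B₃`. Let `γ = ∂_b c - ∂ₐ e`.
If `γ ≠ 0`, integrability makes the minors of `(B₁, B₂)` vanish, which a linear syzygy excludes.
If `γ = 0`, the relation yields `2 x q = L (∂ₐ q - c q)`, and `GenericLine.descent` divides `q` by
`L` again and again, so `q = 0` and the relation is a linear syzygy of cubics without common zero.

*The cases `i = 0, 1`* (`lefschetz_four_point`). The space `A_6` is detected by one functional `φ`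
(`exists_functional`). Up to constants and a change of basis, the Gram matrix of
`(ℓ, ℓ') ↦ φ (L⁴ ℓ ℓ')` on linear forms is the Hessian of the homogenization of
`F (a, b) = φ (L⁶)`. If its determinant vanished identically, the Gordan-Noether theorem in three
variables (`cone_of_hessKer`) would give a fixed linear form `c ≠ 0` with `φ (c L⁵) = 0` for all
`L`. Powers of linear forms span all forms, so `c R₅ ⊆ J(f)`, contradicting that the socle of `A`
lives in degree six (`socle_eq`, `linear_eq_zero_of_socle`).
-/

open MvPolynomial Module

/-- The Jacobian ideal `J(f)`, generated by the first order partial derivatives of `f`. -/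
noncomputable def jacobianIdeal {N : ℕ} (f : MvPolynomial (Fin N) ℂ) :
    Ideal (MvPolynomial (Fin N) ℂ) :=
  Ideal.span (Set.range fun i => pderiv i f)

/-- The degree-`m` graded piece of the quotient `R ⧸ I`, namely the image of the
space of homogeneous polynomials of degree `m`. -/
noncomputable def gradedPiece {N : ℕ} (I : Ideal (MvPolynomial (Fin N) ℂ)) (m : ℕ) :
    Submodule ℂ (MvPolynomial (Fin N) ℂ ⧸ I) :=
  Submodule.map (Ideal.Quotient.mkₐ ℂ I).toLinearMap (homogeneousSubmodule (Fin N) ℂ m)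

/-- The Strong Lefschetz Property for the graded quotient algebra `R ⧸ I` with top
(socle) degree `T`: there is a linear form `ℓ` such that for all `i, k` with
`i + k ≤ T`, multiplication by `ℓ^k` from the degree-`i` piece to the degree-`(i+k)`
piece is injective or surjective. -/
def hasSLPQuot {N : ℕ} (I : Ideal (MvPolynomial (Fin N) ℂ)) (T : ℕ) : Prop :=
  ∃ ℓ ∈ homogeneousSubmodule (Fin N) ℂ 1,
    ∀ i k : ℕ, i + k ≤ T →
      (∀ v ∈ gradedPiece I i, (Ideal.Quotient.mk I ℓ) ^ k * v = 0 → v = 0) ∨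
      (∀ w ∈ gradedPiece I (i + k), ∃ v ∈ gradedPiece I i,
        (Ideal.Quotient.mk I ℓ) ^ k * v = w)

/-! ### Exactness of the Koszul complex in three variables -/

section Koszul

variable {R : Type*} [CommRing R]

/-- If `(f₀, f₁, f₂)` contains a regular sequence `a, b`, then a vector parallel to `f`
is a multiple of `f` (vanishing of the second Koszul homology). -/
theorem koszul_second {f0 f1 f2 a b α0 α1 α2 β0 β1 β2 : R}
    (ha : a = α0 * f0 + α1 * f1 + α2 * f2) (hb : b = β0 * f0 + β1 * f1 + β2 * f2)
    (hareg : ∀ u, a * u = 0 → u = 0) (hbreg : ∀ u, a ∣ b * u → a ∣ u)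
    {v0 v1 v2 : R} (h01 : f0 * v1 = f1 * v0) (h02 : f0 * v2 = f2 * v0)
    (h12 : f1 * v2 = f2 * v1) :
    ∃ u, v0 = u * f0 ∧ v1 = u * f1 ∧ v2 = u * f2 := by
  obtain ⟨u, hu⟩ := hbreg (α0 * v0 + α1 * v1 + α2 * v2) ⟨β0 * v0 + β1 * v1 + β2 * v2, by
    rw [ha, hb]
    linear_combination (β0 * α1 - β1 * α0) * h01 + (β0 * α2 - β2 * α0) * h02
      + (β1 * α2 - β2 * α1) * h12⟩
  refine ⟨u, ?_, ?_, ?_⟩ <;> refine sub_eq_zero.1 (hareg _ ?_)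
  · linear_combination v0 * ha + f0 * hu - α1 * h01 - α2 * h02
  · linear_combination v1 * ha + f1 * hu + α0 * h01 - α2 * h12
  · linear_combination v2 * ha + f2 * hu + α0 * h02 + α1 * h12

/-- If `(f₀, f₁, f₂)` contains a regular sequence `a, b, c`, then every syzygy of `f` is a
Koszul syzygy `f × v` (vanishing of the first Koszul homology). -/
theorem koszul_first {f0 f1 f2 a b c α0 α1 α2 β0 β1 β2 γ0 γ1 γ2 : R}
    (ha : a = α0 * f0 + α1 * f1 + α2 * f2) (hb : b = β0 * f0 + β1 * f1 + β2 * f2)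
    (hc : c = γ0 * f0 + γ1 * f1 + γ2 * f2)
    (hareg : ∀ u, a * u = 0 → u = 0) (hbreg : ∀ u, a ∣ b * u → a ∣ u)
    (hcreg : ∀ u, (∃ r s, c * u = a * r + b * s) → ∃ r s, u = a * r + b * s)
    {w0 w1 w2 : R} (h : f0 * w0 + f1 * w1 + f2 * w2 = 0) :
    ∃ v0 v1 v2, w0 = f1 * v2 - f2 * v1 ∧ w1 = f2 * v0 - f0 * v2 ∧ w2 = f0 * v1 - f1 * v0 := by
  -- `y = w × α` satisfies `f × y = a w`, so `y` is parallel to `f` modulo `a`.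
  obtain ⟨y0, hy0⟩ : ∃ y, y = w1 * α2 - w2 * α1 := ⟨_, rfl⟩
  obtain ⟨y1, hy1⟩ : ∃ y, y = w2 * α0 - w0 * α2 := ⟨_, rfl⟩
  obtain ⟨y2, hy2⟩ : ∃ y, y = w0 * α1 - w1 * α0 := ⟨_, rfl⟩
  have e0 : f1 * y2 - f2 * y1 = a * w0 := by
    rw [hy1, hy2, ha]; linear_combination (-α0) * h
  have e1 : f2 * y0 - f0 * y2 = a * w1 := by
    rw [hy0, hy2, ha]; linear_combination (-α1) * h
  have e2 : f0 * y1 - f1 * y0 = a * w2 := by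
    rw [hy1, hy0, ha]; linear_combination (-α2) * h
  have g0 : (β0 * y0 + β1 * y1 + β2 * y2) * f0 = b * y0 + a * (β1 * w2 - β2 * w1) := by
    rw [hb]; linear_combination β1 * e2 - β2 * e1
  have g1 : (β0 * y0 + β1 * y1 + β2 * y2) * f1 = b * y1 + a * (β2 * w0 - β0 * w2) := by
    rw [hb]; linear_combination β2 * e0 - β0 * e2
  have g2 : (β0 * y0 + β1 * y1 + β2 * y2) * f2 = b * y2 + a * (β0 * w1 - β1 * w0) := by
    rw [hb]; linear_combination β0 * e1 - β1 * e0
  obtain ⟨r, u, hru⟩ := hcreg (β0 * y0 + β1 * y1 + β2 * y2)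
    ⟨γ0 * (β1 * w2 - β2 * w1) + γ1 * (β2 * w0 - β0 * w2) + γ2 * (β0 * w1 - β1 * w0),
      γ0 * y0 + γ1 * y1 + γ2 * y2, by
        rw [hc]; linear_combination γ0 * g0 + γ1 * g1 + γ2 * g2⟩
  obtain ⟨v0, hv0⟩ := hbreg (y0 - u * f0) ⟨r * f0 - (β1 * w2 - β2 * w1), by
    linear_combination f0 * hru - g0⟩
  obtain ⟨v1, hv1⟩ := hbreg (y1 - u * f1) ⟨r * f1 - (β2 * w0 - β0 * w2), by
    linear_combination f1 * hru - g1⟩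
  obtain ⟨v2, hv2⟩ := hbreg (y2 - u * f2) ⟨r * f2 - (β0 * w1 - β1 * w0), by
    linear_combination f2 * hru - g2⟩
  refine ⟨v0, v1, v2, ?_, ?_, ?_⟩ <;> refine sub_eq_zero.1 (hareg _ ?_)
  · linear_combination -e0 + f1 * hv2 - f2 * hv1
  · linear_combination -e1 + f2 * hv0 - f0 * hv2
  · linear_combination -e2 + f0 * hv1 - f1 * hv0

end Koszul

/-- Multiplication by `X₂^N` is injective modulo `(X₀^N, X₁^N)`. -/
theorem X_pow_regular_two {k : Type*} [Field k] (N : ℕ) (u : MvPolynomial (Fin 3) k)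
    (h : ∃ r s, X 2 ^ N * u = X 0 ^ N * r + X 1 ^ N * s) :
    ∃ r s, u = X 0 ^ N * r + X 1 ^ N * s := by
  obtain ⟨r, s, h⟩ := h
  have key : ∀ p : MvPolynomial (Fin 3) k, p ∈ Ideal.span
      ((fun s => monomial s (1 : k)) '' {Finsupp.single 0 N, Finsupp.single 1 N}) ↔
      ∃ r s, p = X 0 ^ N * r + X 1 ^ N * s := by
    intro p
    rw [Set.image_pair, Ideal.mem_span_pair]
    simp only [← X_pow_eq_monomial]
    constructor
    · rintro ⟨r, s, h⟩
      exact ⟨r, s, by rw [← h]; ring⟩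
    · rintro ⟨r, s, h⟩
      exact ⟨r, s, by rw [h]; ring⟩
  rw [← key]
  have h2 := (key _).2 ⟨r, s, h⟩
  rw [mem_ideal_span_monomial_image] at h2 ⊢
  intro m hm
  have hm' : m + Finsupp.single 2 N ∈ (X 2 ^ N * u).support := by
    rw [MvPolynomial.mem_support_iff, X_pow_eq_monomial, add_comm, coeff_monomial_mul, one_mul]
    exact MvPolynomial.mem_support_iff.1 hm
  obtain ⟨t, ht, hle⟩ := h2 _ hm'
  refine ⟨t, ht, fun i => ?_⟩
  have := hle i
  rcases ht with rfl | ht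
  · fin_cases i <;> simp_all
  · rw [Set.mem_singleton_iff] at ht
    subst ht
    fin_cases i <;> simp_all

theorem X_pow_regular_one {k : Type*} [Field k] {n : ℕ} {i j : Fin n} (hij : i ≠ j) (N : ℕ)
    (u : MvPolynomial (Fin n) k) (h : X i ^ N ∣ X j ^ N * u) : X i ^ N ∣ u := by
  refine (X_prime (R := k) (i := i)).pow_dvd_of_dvd_mul_left N (fun hd => ?_) h
  have := (X_prime (R := k) (i := i)).dvd_of_dvd_pow hd
  rw [X_dvd_X] at this
  simp_all

/-- `f` generates an ideal containing powers of all the variables. -/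
def PowIn {k : Type*} [Field k] {n : ℕ} (f : Fin 3 → MvPolynomial (Fin n) k) (N : ℕ) : Prop :=
  ∀ i : Fin n, ∃ α : Fin 3 → MvPolynomial (Fin n) k,
    X i ^ N = α 0 * f 0 + α 1 * f 1 + α 2 * f 2

theorem PowIn.syz {k : Type*} [Field k] {f : Fin 3 → MvPolynomial (Fin 3) k} {N : ℕ}
    (hf : PowIn f N) {w0 w1 w2 : MvPolynomial (Fin 3) k}
    (h : f 0 * w0 + f 1 * w1 + f 2 * w2 = 0) :
    ∃ v0 v1 v2, w0 = f 1 * v2 - f 2 * v1 ∧ w1 = f 2 * v0 - f 0 * v2 ∧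
      w2 = f 0 * v1 - f 1 * v0 := by
  obtain ⟨α, hα⟩ := hf 0
  obtain ⟨β, hβ⟩ := hf 1
  obtain ⟨γ, hγ⟩ := hf 2
  refine koszul_first hα hβ hγ (fun u hu => ?_) (X_pow_regular_one (by decide) N)
    (X_pow_regular_two N) h
  exact (mul_eq_zero.1 hu).resolve_left (pow_ne_zero _ (X_ne_zero _))

/-- Valid in any number `n ≥ 2` of variables. -/
theorem PowIn.parallel {k : Type*} [Field k] {n : ℕ} {f : Fin 3 → MvPolynomial (Fin n) k} {N : ℕ}
    (hf : PowIn f N) {i j : Fin n} (hij : i ≠ j) {v0 v1 v2 : MvPolynomial (Fin n) k}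
    (h01 : f 0 * v1 = f 1 * v0) (h02 : f 0 * v2 = f 2 * v0) (h12 : f 1 * v2 = f 2 * v1) :
    ∃ u, v0 = u * f 0 ∧ v1 = u * f 1 ∧ v2 = u * f 2 := by
  obtain ⟨α, hα⟩ := hf i
  obtain ⟨β, hβ⟩ := hf j
  refine koszul_second hα hβ (fun u hu => ?_) (X_pow_regular_one hij N) h01 h02 h12
  exact (mul_eq_zero.1 hu).resolve_left (pow_ne_zero _ (X_ne_zero _))

/-! ### Degree considerations -/

theorem coeff_mul_eq_zero_of_hom {σ k : Type*} [CommRing k] {f : MvPolynomial σ k} {d : ℕ}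
    (hf : f.IsHomogeneous d) (v : MvPolynomial σ k) {m : σ →₀ ℕ} (hm : m.degree < d) :
    coeff m (f * v) = 0 := by
  classical
  rw [coeff_mul]
  refine Finset.sum_eq_zero fun x hx => ?_
  rw [hf.coeff_eq_zero, zero_mul]
  rw [Finset.HasAntidiagonal.mem_antidiagonal] at hx
  have : m.degree = x.1.degree + x.2.degree := by rw [← hx, map_add]
  omega

theorem eq_zero_of_coeff_of_totalDegree {σ k : Type*} [CommRing k] {p : MvPolynomial σ k} {d : ℕ}
    (hp : p.totalDegree < d) (h : ∀ m : σ →₀ ℕ, m.degree < d → coeff m p = 0) : p = 0 := by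
  ext m
  rw [coeff_zero]
  by_cases hm : m.degree < d
  · exact h m hm
  · exact coeff_eq_zero_of_totalDegree_lt (by
      have : m.degree = ∑ i ∈ m.support, m i := rfl
      omega)

theorem PowIn.syz_low {k : Type*} [Field k] {f : Fin 3 → MvPolynomial (Fin 3) k} {N : ℕ}
    (hf : PowIn f N) (hhom : ∀ i, (f i).IsHomogeneous 3) {w0 w1 w2 : MvPolynomial (Fin 3) k}
    (h : f 0 * w0 + f 1 * w1 + f 2 * w2 = 0) (h0 : w0.totalDegree < 3) (h1 : w1.totalDegree < 3)
    (h2 : w2.totalDegree < 3) : w0 = 0 ∧ w1 = 0 ∧ w2 = 0 := by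
  obtain ⟨v0, v1, v2, e0, e1, e2⟩ := hf.syz h
  refine ⟨eq_zero_of_coeff_of_totalDegree h0 fun m hm => ?_,
    eq_zero_of_coeff_of_totalDegree h1 fun m hm => ?_,
    eq_zero_of_coeff_of_totalDegree h2 fun m hm => ?_⟩
  · rw [e0, coeff_sub, coeff_mul_eq_zero_of_hom (hhom 1) _ hm,
      coeff_mul_eq_zero_of_hom (hhom 2) _ hm, sub_zero]
  · rw [e1, coeff_sub, coeff_mul_eq_zero_of_hom (hhom 2) _ hm,
      coeff_mul_eq_zero_of_hom (hhom 0) _ hm, sub_zero]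
  · rw [e2, coeff_sub, coeff_mul_eq_zero_of_hom (hhom 0) _ hm,
      coeff_mul_eq_zero_of_hom (hhom 1) _ hm, sub_zero]

theorem PowIn.parallel_low {k : Type*} [Field k] {n : ℕ} {f : Fin 3 → MvPolynomial (Fin n) k}
    {N : ℕ} (hf : PowIn f N) (hhom : ∀ i, (f i).IsHomogeneous 3) {i j : Fin n} (hij : i ≠ j)
    {v0 v1 v2 : MvPolynomial (Fin n) k}
    (h01 : f 0 * v1 = f 1 * v0) (h02 : f 0 * v2 = f 2 * v0) (h12 : f 1 * v2 = f 2 * v1)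
    (h0 : v0.totalDegree < 3) (h1 : v1.totalDegree < 3)
    (h2 : v2.totalDegree < 3) : v0 = 0 ∧ v1 = 0 ∧ v2 = 0 := by
  obtain ⟨u, e0, e1, e2⟩ := hf.parallel hij h01 h02 h12
  refine ⟨eq_zero_of_coeff_of_totalDegree h0 fun m hm => ?_,
    eq_zero_of_coeff_of_totalDegree h1 fun m hm => ?_,
    eq_zero_of_coeff_of_totalDegree h2 fun m hm => ?_⟩
  · rw [e0, mul_comm, coeff_mul_eq_zero_of_hom (hhom 0) _ hm]
  · rw [e1, mul_comm, coeff_mul_eq_zero_of_hom (hhom 1) _ hm]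
  · rw [e2, mul_comm, coeff_mul_eq_zero_of_hom (hhom 2) _ hm]

/-! ### Coefficientwise derivations -/

section CoeffDerivation

variable {K σ : Type*} [CommRing K]

/-- A derivation of the coefficient ring, applied to all coefficients of a polynomial. -/
noncomputable def coeffD (d : Derivation ℤ K K) (p : MvPolynomial σ K) : MvPolynomial σ K :=
  ∑ m ∈ p.support, monomial m (d (coeff m p))

variable (d : Derivation ℤ K K)

theorem coeff_coeffD (p : MvPolynomial σ K) (m : σ →₀ ℕ) :
    coeff m (coeffD d p) = d (coeff m p) := by
  classical
  rw [coeffD, coeff_sum]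
  simp only [coeff_monomial]
  rw [Finset.sum_ite_eq']
  split_ifs with h
  · rfl
  · rw [MvPolynomial.notMem_support_iff.1 h, map_zero]

theorem coeffD_add (p q : MvPolynomial σ K) :
    coeffD d (p + q) = coeffD d p + coeffD d q := by
  ext m
  simp [coeff_coeffD]

theorem coeffD_sub (p q : MvPolynomial σ K) :
    coeffD d (p - q) = coeffD d p - coeffD d q := by
  ext m
  simp [coeff_coeffD]

theorem coeffD_mul (p q : MvPolynomial σ K) :
    coeffD d (p * q) = coeffD d p * q + p * coeffD d q := by
  classical
  ext m
  rw [coeff_coeffD, coeff_add, coeff_mul, coeff_mul, coeff_mul, map_sum, ← Finset.sum_add_distrib]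
  refine Finset.sum_congr rfl fun x _ => ?_
  rw [coeff_coeffD, coeff_coeffD, Derivation.leibniz, smul_eq_mul, smul_eq_mul]
  ring

theorem coeffD_C (c : K) : coeffD d (C c : MvPolynomial σ K) = C (d c) := by
  classical
  ext m
  rw [coeff_coeffD, coeff_C, coeff_C]
  split_ifs <;> simp

theorem coeffD_X (i : σ) : coeffD d (X i : MvPolynomial σ K) = 0 := by
  classical
  ext m
  rw [coeff_coeffD, coeff_X, coeff_zero]
  split_ifs <;> simp

end CoeffDerivation

/-! ### A generic line -/

/-- A field `K` with two commuting derivations `∂ₐ`, `∂_b` dual to elements `a`, `b`, and three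
ternary cubics without common zero whose coefficients are constants. The line of interest is
`L = z - a x - b y`. -/
structure GenericLine (K : Type*) [Field K] where
  /-- The derivation `∂ₐ`. -/
  da : Derivation ℤ K K
  /-- The derivation `∂_b`. -/
  db : Derivation ℤ K K
  comm : ∀ c, da (db c) = db (da c)
  /-- The first parameter of the line. -/
  a : K
  /-- The second parameter of the line. -/
  b : K
  da_a : da a = 1
  da_b : da b = 0
  db_a : db a = 0
  db_b : db b = 1
  /-- The three cubics. -/
  f : Fin 3 → MvPolynomial (Fin 3) K
  hom : ∀ i, (f i).IsHomogeneous 3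
  /-- Exponent such that the powers of the variables lie in the ideal of the cubics. -/
  N : ℕ
  powIn : PowIn f N
  da_f : ∀ i, coeffD da (f i) = 0
  db_f : ∀ i, coeffD db (f i) = 0

namespace GenericLine

variable {K : Type*} [Field K] (G : GenericLine K)

/-- The linear form `z - a x - b y`. -/
noncomputable def L : MvPolynomial (Fin 3) K := X 2 - C G.a * X 0 - C G.b * X 1

/-- Restriction to the line `L = 0`, with coordinates `x`, `y`. -/
noncomputable def ρ : MvPolynomial (Fin 3) K →ₐ[K] MvPolynomial (Fin 2) K :=
  aeval ![X 0, X 1, C G.a * X 0 + C G.b * X 1]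

@[simp] theorem ρ_X0 : G.ρ (X 0) = X 0 := by simp [ρ]
@[simp] theorem ρ_X1 : G.ρ (X 1) = X 1 := by simp [ρ]
theorem ρ_X2 : G.ρ (X 2) = C G.a * X 0 + C G.b * X 1 := by simp [ρ]
@[simp] theorem ρ_C (c : K) : G.ρ (C c) = C c := by simp [ρ]

@[simp] theorem ρ_L : G.ρ G.L = 0 := by
  simp [L, ρ_X2]

theorem L_ne_zero : G.L ≠ 0 := by
  intro h
  have h2 : coeff (Finsupp.single 2 1) G.L = 0 := by rw [h, coeff_zero]
  simp [L, coeff_X, coeff_C_mul, Finsupp.single_left_inj] at h2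

theorem L_dvd_of_ρ {p : MvPolynomial (Fin 3) K} (hp : G.ρ p = 0) : G.L ∣ p := by
  let ι : MvPolynomial (Fin 2) K →ₐ[K] MvPolynomial (Fin 3) K := aeval ![X 0, X 1]
  have key : (Ideal.Quotient.mkₐ K (Ideal.span {G.L})).comp (ι.comp G.ρ) =
      Ideal.Quotient.mkₐ K (Ideal.span {G.L}) := by
    apply MvPolynomial.algHom_ext
    intro i
    fin_cases i
    · simp [ι, ρ]
    · simp [ι, ρ]
    · simp only [Fin.reduceFinMk, AlgHom.comp_apply, ρ_X2, Ideal.Quotient.mkₐ_eq_mk]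
      rw [Ideal.Quotient.eq, Ideal.mem_span_singleton]
      refine ⟨-1, ?_⟩
      simp [ι, L, algebraMap_eq]
      ring
  have := DFunLike.congr_fun key p
  rw [AlgHom.comp_apply, AlgHom.comp_apply, hp, map_zero, map_zero, Ideal.Quotient.mkₐ_eq_mk] at this
  rw [← Ideal.mem_span_singleton]
  exact Ideal.Quotient.eq_zero_iff_mem.1 this.symm

theorem da_L : coeffD G.da G.L = - X 0 := by
  simp [L, coeffD_sub, coeffD_mul, coeffD_C, coeffD_X, G.da_a, G.da_b]

theorem db_L : coeffD G.db G.L = - X 1 := by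
  simp [L, coeffD_sub, coeffD_mul, coeffD_C, coeffD_X, G.db_a, G.db_b]

theorem L_totalDegree_pos : 0 < G.L.totalDegree := by
  by_contra h
  have h0 : G.L.totalDegree = 0 := by omega
  have h2 : coeff (Finsupp.single 2 1) G.L = 0 := coeff_eq_zero_of_totalDegree_lt (by
    rw [h0]; simp)
  simp [L, coeff_X, coeff_C_mul, Finsupp.single_left_inj] at h2

/-- Descent: a solution `q` of the differential equation is divisible by `L`, and the quotient
solves an equation of the same shape. -/
theorem descent [CharZero K] (c : K) : ∀ (D j : ℕ) (q : MvPolynomial (Fin 3) K),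
    q.totalDegree ≤ D → 0 < j →
    C (j : K) * X 0 * q = G.L * (coeffD G.da q - C c * q) → q = 0 := by
  intro D
  induction D with
  | zero =>
    intro j q hD hj h
    by_contra hq
    have h1 := congrArg G.ρ h
    simp only [map_mul, ρ_C, ρ_X0, ρ_L, zero_mul] at h1
    have h2 : G.ρ q = 0 := by simpa [X_ne_zero, hj.ne'] using h1
    obtain ⟨m, hm⟩ := G.L_dvd_of_ρ h2
    have hm0 : m ≠ 0 := by rintro rfl; simp at hm; exact hq hm
    have := totalDegree_mul_of_isDomain G.L_ne_zero hm0
    rw [← hm] at this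
    have := G.L_totalDegree_pos
    omega
  | succ D ih =>
    intro j q hD hj h
    by_contra hq
    have h1 := congrArg G.ρ h
    simp only [map_mul, ρ_C, ρ_X0, ρ_L, zero_mul] at h1
    have h2 : G.ρ q = 0 := by simpa [X_ne_zero, hj.ne'] using h1
    obtain ⟨m, hm⟩ := G.L_dvd_of_ρ h2
    have hm0 : m ≠ 0 := by rintro rfl; simp at hm; exact hq hm
    have hdeg := totalDegree_mul_of_isDomain G.L_ne_zero hm0
    rw [← hm] at hdeg
    have := G.L_totalDegree_pos
    refine hm0 (ih (j + 1) m (by omega) (by omega) ?_)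
    refine mul_left_cancel₀ G.L_ne_zero ?_
    rw [hm, coeffD_mul, da_L] at h
    push_cast
    rw [map_add, map_one]
    linear_combination h

/-- The restricted cubics. -/
noncomputable def h (i : Fin 3) : MvPolynomial (Fin 2) K := G.ρ (G.f i)

theorem h_hom (i : Fin 3) : (G.h i).IsHomogeneous 3 := by
  have := (G.hom i).aeval (g := (![X 0, X 1, C G.a * X 0 + C G.b * X 1] :
    Fin 3 → MvPolynomial (Fin 2) K)) (n := 1) (fun j => by
    fin_cases j
    · exact isHomogeneous_X _ _
    · exact isHomogeneous_X _ _
    · exact ((isHomogeneous_X K 0).C_mul _).add ((isHomogeneous_X K 1).C_mul _))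
  rw [one_mul] at this
  exact this

theorem h_powIn : PowIn G.h G.N := by
  have key : ∀ i : Fin 3, ∃ α : Fin 3 → MvPolynomial (Fin 2) K,
      G.ρ (X i) ^ G.N = α 0 * G.h 0 + α 1 * G.h 1 + α 2 * G.h 2 := fun i => by
    obtain ⟨α, hα⟩ := G.powIn i
    refine ⟨fun j => G.ρ (α j), ?_⟩
    have := congrArg G.ρ hα
    simpa [h] using this
  intro i
  fin_cases i
  · simpa using key 0
  · simpa using key 1

end GenericLine

/-! ### Linear syzygies along a generic line -/

namespace GenericLine

variable {K : Type*} [Field K] (G : GenericLine K)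

/-- The combination `w · f` of the cubics with constant coefficients. -/
noncomputable def comb (w : Fin 3 → K) : MvPolynomial (Fin 3) K :=
  C (w 0) * G.f 0 + C (w 1) * G.f 1 + C (w 2) * G.f 2

/-- The combination `w · h` of the restricted cubics. -/
noncomputable def combh (w : Fin 3 → K) : MvPolynomial (Fin 2) K :=
  C (w 0) * G.h 0 + C (w 1) * G.h 1 + C (w 2) * G.h 2

theorem ρ_comb (w : Fin 3 → K) : G.ρ (G.comb w) = G.combh w := by
  simp [comb, combh, h]

theorem da_comb (w : Fin 3 → K) :
    coeffD G.da (G.comb w) = G.comb (fun i => G.da (w i)) := by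
  simp [comb, coeffD_add, coeffD_mul, coeffD_C, G.da_f]

theorem db_comb (w : Fin 3 → K) :
    coeffD G.db (G.comb w) = G.comb (fun i => G.db (w i)) := by
  simp [comb, coeffD_add, coeffD_mul, coeffD_C, G.db_f]

theorem comb_eq_zero {w : Fin 3 → K} (hw : G.comb w = 0) : w = 0 := by
  have := G.powIn.syz_low G.hom (w0 := C (w 0)) (w1 := C (w 1)) (w2 := C (w 2))
    (by rw [← hw, comb]; ring) (by simp) (by simp) (by simp)
  simp only [C_eq_zero] at this
  funext i
  fin_cases i
  · exact this.1
  · exact this.2.1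
  · exact this.2.2

/-- Vectors in `K³` with vanishing cross product with a nonzero vector are multiples of it. -/
theorem exists_smul_of_cross {K : Type*} [Field K] {w u : Fin 3 → K} (hw : w ≠ 0)
    (h01 : w 0 * u 1 = w 1 * u 0) (h02 : w 0 * u 2 = w 2 * u 0) (h12 : w 1 * u 2 = w 2 * u 1) :
    ∃ c : K, ∀ i, u i = c * w i := by
  obtain ⟨i, hi⟩ := Function.ne_iff.1 hw
  refine ⟨u i / w i, fun j => ?_⟩
  have hi' : w i ≠ 0 := hi
  rw [div_mul_eq_mul_div, eq_div_iff hi']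
  fin_cases i <;> fin_cases j <;>
    simp only [Fin.zero_eta, Fin.mk_one, Fin.reduceFinMk] <;>
    first
    | rfl | linear_combination h01 | linear_combination -h01 | linear_combination h02
    | linear_combination -h02 | linear_combination h12 | linear_combination -h12

/-- A vector of binary polynomials of degree less than three which is parallel to `h` vanishes.
This applies to cross products of syzygies of `h`. -/
theorem cross_eq_zero {n0 n1 n2 : MvPolynomial (Fin 2) K}
    (h01 : G.h 0 * n1 = G.h 1 * n0) (h02 : G.h 0 * n2 = G.h 2 * n0) (h12 : G.h 1 * n2 = G.h 2 * n1)
    (d0 : n0.totalDegree < 3) (d1 : n1.totalDegree < 3) (d2 : n2.totalDegree < 3) :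
    n0 = 0 ∧ n1 = 0 ∧ n2 = 0 :=
  G.h_powIn.parallel_low G.h_hom (i := 0) (j := 1) (by decide) h01 h02 h12 d0 d1 d2

theorem coeff_h_eq_zero (i : Fin 3) (p : MvPolynomial (Fin 2) K) {m : Fin 2 →₀ ℕ}
    (hm : m.degree < 3) : coeff m (p * G.h i) = 0 := by
  rw [mul_comm]
  exact coeff_mul_eq_zero_of_hom (G.h_hom i) p hm

/-- A common divisor of the restricted cubics is constant. -/
theorem isUnit_of_dvd_h {p : MvPolynomial (Fin 2) K} (hp : ∀ i, p ∣ G.h i) : IsUnit p := by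
  have key : ∀ i, p ∣ X i ^ G.N := fun i => by
    obtain ⟨α, hα⟩ := G.h_powIn i
    rw [hα]
    exact dvd_add (dvd_add ((hp 0).mul_left _) ((hp 1).mul_left _)) ((hp 2).mul_left _)
  obtain ⟨k, -, hk⟩ := (dvd_prime_pow (X_prime (R := K) (i := (0 : Fin 2))) G.N).1 (key 0)
  rcases Nat.eq_zero_or_pos k with rfl | hk0
  · rw [pow_zero] at hk
    exact hk.symm.isUnit isUnit_one
  · exfalso
    have h1 : (X 0 : MvPolynomial (Fin 2) K) ∣ X 1 ^ G.N :=
      (dvd_pow_self _ hk0.ne').trans (hk.symm.dvd.trans (key 1))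
    have h2 := (X_prime (R := K) (i := (0 : Fin 2))).dvd_of_dvd_pow h1
    rw [X_dvd_X] at h2
    simp_all

/-- The cubics stay linearly independent on a generic line. -/
theorem combh_eq_zero [CharZero K] {w : Fin 3 → K} (hw : G.combh w = 0) : w = 0 := by
  by_contra hw0
  obtain ⟨p, hp⟩ := G.L_dvd_of_ρ (p := G.comb w) (by rw [ρ_comb, hw])
  have ha : G.comb (fun i => G.da (w i)) = - X 0 * p + G.L * coeffD G.da p := by
    rw [← da_comb, hp, coeffD_mul, da_L]
  have hb : G.comb (fun i => G.db (w i)) = - X 1 * p + G.L * coeffD G.db p := by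
    rw [← db_comb, hp, coeffD_mul, db_L]
  have ha' := congrArg G.ρ ha
  have hb' := congrArg G.ρ hb
  simp only [ρ_comb, map_add, map_mul, map_neg, ρ_X0, ρ_X1, ρ_L, zero_mul, add_zero] at ha' hb'
  by_cases hρ : G.ρ p = 0
  · -- Then the line direction `w` is constant up to scaling.
    rw [hρ, mul_zero] at ha' hb'
    obtain ⟨m, hm⟩ := G.L_dvd_of_ρ hρ
    have hn := G.cross_eq_zero
      (n0 := C (w 1 * G.da (w 2) - w 2 * G.da (w 1)))
      (n1 := C (w 2 * G.da (w 0) - w 0 * G.da (w 2)))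
      (n2 := C (w 0 * G.da (w 1) - w 1 * G.da (w 0)))
      (by
        simp only [map_sub, map_mul]; simp only [combh] at hw ha'
        linear_combination C (w 2) * ha' - C (G.da (w 2)) * hw)
      (by
        simp only [map_sub, map_mul]; simp only [combh] at hw ha'
        linear_combination -C (w 1) * ha' + C (G.da (w 1)) * hw)
      (by
        simp only [map_sub, map_mul]; simp only [combh] at hw ha'
        linear_combination C (w 0) * ha' - C (G.da (w 0)) * hw)
      ((totalDegree_C _).trans_lt (by norm_num))
      ((totalDegree_C _).trans_lt (by norm_num)) ((totalDegree_C _).trans_lt (by norm_num))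
    simp only [C_eq_zero] at hn
    obtain ⟨c, hc⟩ := exists_smul_of_cross (u := fun i => G.da (w i)) hw0
      (by linear_combination hn.2.2) (by linear_combination -hn.2.1) (by linear_combination hn.1)
    have hca : G.comb (fun i => G.da (w i)) = C c * G.comb w := by
      simp only [comb, hc, map_mul]; ring
    have hm0 : m = 0 := by
      refine G.descent c _ 2 m le_rfl (by norm_num) ?_
      refine mul_left_cancel₀ G.L_ne_zero ?_
      rw [hca, hp, hm, coeffD_mul, da_L] at ha
      simp only [Nat.cast_ofNat, map_ofNat]
      linear_combination ha
    rw [hm0, mul_zero] at hm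
    rw [hm, mul_zero] at hp
    exact hw0 (G.comb_eq_zero hp)
  · -- Either `w, ∂ₐw, ∂_b w` are dependent, or `ρ p` divides all the restricted cubics.
    let M : Matrix (Fin 3) (Fin 3) K := !![w 0, w 1, w 2;
      G.da (w 0), G.da (w 1), G.da (w 2); G.db (w 0), G.db (w 1), G.db (w 2)]
    simp only [combh] at hw ha' hb'
    by_cases hdet : M.det = 0
    · obtain ⟨v, hv0, hv⟩ := Matrix.exists_vecMul_eq_zero_iff.2 hdet
      have e0 := congrFun hv 0
      have e1 := congrFun hv 1
      have e2 := congrFun hv 2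
      simp [M, Matrix.vecMul, dotProduct, Fin.sum_univ_three] at e0 e1 e2
      have e0' := congrArg (C (σ := Fin 2)) e0
      have e1' := congrArg (C (σ := Fin 2)) e1
      have e2' := congrArg (C (σ := Fin 2)) e2
      simp only [map_add, map_mul, map_zero] at e0' e1' e2'
      have hlin : (C (v 1) * X 0 + C (v 2) * X 1 : MvPolynomial (Fin 2) K) * G.ρ p = 0 := by
        linear_combination C (v 0) * hw + C (v 1) * ha' + C (v 2) * hb' - G.h 0 * e0'
          - G.h 1 * e1' - G.h 2 * e2'
      have hlin := (mul_eq_zero.1 hlin).resolve_right hρ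
      have hv1 : v 1 = 0 := by
        have := congrArg (coeff (Finsupp.single 0 1)) hlin
        simpa [coeff_C_mul, coeff_X, Finsupp.single_left_inj] using this
      have hv2 : v 2 = 0 := by
        have := congrArg (coeff (Finsupp.single 1 1)) hlin
        simpa [coeff_C_mul, coeff_X, Finsupp.single_left_inj] using this
      have hv00 : v 0 ≠ 0 := by
        intro h00
        apply hv0
        funext i
        fin_cases i <;> assumption
      rw [hv1, hv2] at e0 e1 e2
      simp [hv00] at e0 e1 e2
      apply hw0
      funext i
      fin_cases i <;> assumption
    · have hdvd : ∀ i, G.ρ p ∣ G.h i := by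
        have hu : IsUnit (C M.det : MvPolynomial (Fin 2) K) :=
          (isUnit_iff_ne_zero.2 hdet).map C
        intro i
        rw [← hu.dvd_mul_left]
        rw [Matrix.det_fin_three]
        simp only [M, Matrix.of_apply, Matrix.cons_val', Matrix.cons_val_zero, Matrix.cons_val_one,
          Matrix.cons_val, map_sub, map_add, map_mul]
        -- Cramer's rule
        fin_cases i
        · exact ⟨X 0 * (C (w 1) * C (G.db (w 2)) - C (w 2) * C (G.db (w 1)))
            - X 1 * (C (w 1) * C (G.da (w 2)) - C (w 2) * C (G.da (w 1))), by
              simp only [Fin.zero_eta]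
              linear_combination
                (C (G.da (w 1)) * C (G.db (w 2)) - C (G.da (w 2)) * C (G.db (w 1))) * hw
                - (C (w 1) * C (G.db (w 2)) - C (w 2) * C (G.db (w 1))) * ha'
                + (C (w 1) * C (G.da (w 2)) - C (w 2) * C (G.da (w 1))) * hb'⟩
        · exact ⟨X 0 * (C (w 2) * C (G.db (w 0)) - C (w 0) * C (G.db (w 2)))
            - X 1 * (C (w 2) * C (G.da (w 0)) - C (w 0) * C (G.da (w 2))), by
              simp only [Fin.mk_one]
              linear_combination
                (C (G.da (w 2)) * C (G.db (w 0)) - C (G.da (w 0)) * C (G.db (w 2))) * hw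
                - (C (w 2) * C (G.db (w 0)) - C (w 0) * C (G.db (w 2))) * ha'
                + (C (w 2) * C (G.da (w 0)) - C (w 0) * C (G.da (w 2))) * hb'⟩
        · exact ⟨X 0 * (C (w 0) * C (G.db (w 1)) - C (w 1) * C (G.db (w 0)))
            - X 1 * (C (w 0) * C (G.da (w 1)) - C (w 1) * C (G.da (w 0))), by
              simp only [Fin.reduceFinMk]
              linear_combination
                (C (G.da (w 0)) * C (G.db (w 1)) - C (G.da (w 1)) * C (G.db (w 0))) * hw
                - (C (w 0) * C (G.db (w 1)) - C (w 1) * C (G.db (w 0))) * ha'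
                + (C (w 0) * C (G.da (w 1)) - C (w 1) * C (G.da (w 0))) * hb'⟩
      obtain ⟨g, hg⟩ := (G.isUnit_of_dvd_h hdvd).exists_right_inv
      -- A constant `ρ p` contradicts `w_a · h = - x ρ p` in degree one.
      have hx : (X 0 : MvPolynomial (Fin 2) K) = (-g * C (G.da (w 0))) * G.h 0
          + (-g * C (G.da (w 1))) * G.h 1 + (-g * C (G.da (w 2))) * G.h 2 := by
        linear_combination g * ha' - X 0 * hg
      have := congrArg (coeff (Finsupp.single 0 1)) hx
      rw [coeff_add, coeff_add, G.coeff_h_eq_zero, G.coeff_h_eq_zero, G.coeff_h_eq_zero] at this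
      · simp [coeff_X] at this
      all_goals simp

end GenericLine

namespace GenericLine

variable {K : Type*} [Field K] (G : GenericLine K)

theorem combh_zero : G.combh 0 = 0 := by simp [combh]

/-- The two coefficient vectors of a linear syzygy of the restricted cubics are independent. -/
theorem linear_syz_indep [CharZero K] {B1 B2 : Fin 3 → K}
    (hB : X 0 * G.combh B1 + X 1 * G.combh B2 = 0)
    (h01 : B1 0 * B2 1 = B1 1 * B2 0) (h02 : B1 0 * B2 2 = B1 2 * B2 0)
    (h12 : B1 1 * B2 2 = B1 2 * B2 1) : B1 = 0 ∧ B2 = 0 := by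
  by_cases h1 : B1 = 0
  · refine ⟨h1, G.combh_eq_zero ?_⟩
    rw [h1, combh_zero, mul_zero, zero_add] at hB
    exact (mul_eq_zero.1 hB).resolve_left (X_ne_zero _)
  · exfalso
    obtain ⟨c, hc⟩ := exists_smul_of_cross h1 h01 h02 h12
    have e : (X 0 + C c * X 1) * G.combh B1 = 0 := by
      rw [← hB]
      simp only [combh, hc, map_mul]
      ring
    rcases mul_eq_zero.1 e with e | e
    · have := congrArg (coeff (Finsupp.single 0 1)) e
      simp [coeff_C_mul, coeff_X, Finsupp.single_left_inj] at this
    · exact h1 (G.combh_eq_zero e)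

theorem quad_coeffs {u v w : K}
    (h : (C u * X 0 ^ 2 + C v * (X 0 * X 1) + C w * X 1 ^ 2 : MvPolynomial (Fin 2) K) = 0) :
    u = 0 ∧ v = 0 ∧ w = 0 := by
  have ev : ∀ s t : K, u * s ^ 2 + v * (s * t) + w * t ^ 2 = 0 := fun s t => by
    have := congrArg (eval ![s, t]) h
    simpa using this
  have e1 := ev 1 0
  have e2 := ev 0 1
  have e3 := ev 1 1
  refine ⟨by linear_combination e1, by linear_combination e3 - e1 - e2, by linear_combination e2⟩

theorem quad_totalDegree (u v w : K) :
    (C u * X 0 ^ 2 + C v * (X 0 * X 1) + C w * X 1 ^ 2 : MvPolynomial (Fin 2) K).totalDegree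
      < 3 := by
  have h : (C u * X 0 ^ 2 + C v * (X 0 * X 1) + C w * X 1 ^ 2 :
      MvPolynomial (Fin 2) K).IsHomogeneous 2 :=
    (((isHomogeneous_X_pow 0 2).C_mul u).add
      (((isHomogeneous_X K 0).mul (isHomogeneous_X K 1)).C_mul v)).add
      ((isHomogeneous_X_pow 1 2).C_mul w)
  exact h.totalDegree_le.trans_lt (by norm_num)

/-- The restricted cubics have at most one linear syzygy up to scaling. -/
theorem linear_syz_unique [CharZero K] {B1 B2 C1 C2 : Fin 3 → K}
    (hB : X 0 * G.combh B1 + X 1 * G.combh B2 = 0)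
    (hC : X 0 * G.combh C1 + X 1 * G.combh C2 = 0) (h0 : ¬ (B1 = 0 ∧ B2 = 0)) :
    ∃ c, (∀ i, C1 i = c * B1 i) ∧ (∀ i, C2 i = c * B2 i) := by
  have n := G.cross_eq_zero
    (n0 := C (B1 1 * C1 2 - B1 2 * C1 1) * X 0 ^ 2
      + C (B1 1 * C2 2 - B1 2 * C2 1 + B2 1 * C1 2 - B2 2 * C1 1) * (X 0 * X 1)
      + C (B2 1 * C2 2 - B2 2 * C2 1) * X 1 ^ 2)
    (n1 := C (B1 2 * C1 0 - B1 0 * C1 2) * X 0 ^ 2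
      + C (B1 2 * C2 0 - B1 0 * C2 2 + B2 2 * C1 0 - B2 0 * C1 2) * (X 0 * X 1)
      + C (B2 2 * C2 0 - B2 0 * C2 2) * X 1 ^ 2)
    (n2 := C (B1 0 * C1 1 - B1 1 * C1 0) * X 0 ^ 2
      + C (B1 0 * C2 1 - B1 1 * C2 0 + B2 0 * C1 1 - B2 1 * C1 0) * (X 0 * X 1)
      + C (B2 0 * C2 1 - B2 1 * C2 0) * X 1 ^ 2)
    (by
      simp only [combh] at hB hC
      simp only [map_sub, map_add, map_mul]
      linear_combination (C (B1 2) * X 0 + C (B2 2) * X 1) * hC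
        - (C (C1 2) * X 0 + C (C2 2) * X 1) * hB)
    (by
      simp only [combh] at hB hC
      simp only [map_sub, map_add, map_mul]
      linear_combination -(C (B1 1) * X 0 + C (B2 1) * X 1) * hC
        + (C (C1 1) * X 0 + C (C2 1) * X 1) * hB)
    (by
      simp only [combh] at hB hC
      simp only [map_sub, map_add, map_mul]
      linear_combination (C (B1 0) * X 0 + C (B2 0) * X 1) * hC
        - (C (C1 0) * X 0 + C (C2 0) * X 1) * hB)
    (quad_totalDegree _ _ _) (quad_totalDegree _ _ _) (quad_totalDegree _ _ _)
  obtain ⟨a0, a1, a2⟩ := quad_coeffs n.1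
  obtain ⟨b0, b1, b2⟩ := quad_coeffs n.2.1
  obtain ⟨c0, c1, c2⟩ := quad_coeffs n.2.2
  have hB1 : B1 ≠ 0 := fun e => h0 (G.linear_syz_indep hB (by simp [e]) (by simp [e]) (by simp [e]))
  have hB2 : B2 ≠ 0 := fun e => h0 (G.linear_syz_indep hB (by simp [e]) (by simp [e]) (by simp [e]))
  obtain ⟨c, hc⟩ := exists_smul_of_cross (u := C1) hB1 (by linear_combination c0)
    (by linear_combination -b0) (by linear_combination a0)
  obtain ⟨c', hc'⟩ := exists_smul_of_cross (u := C2) hB2 (by linear_combination c2)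
    (by linear_combination -b2) (by linear_combination a2)
  by_cases hcc : c = c'
  · exact ⟨c, hc, by rw [hcc]; exact hc'⟩
  · exfalso
    have hcc' : c' - c ≠ 0 := fun e => hcc (by linear_combination -e)
    refine h0 (G.linear_syz_indep hB ?_ ?_ ?_) <;> apply mul_left_cancel₀ hcc'
    · rw [hc, hc, hc', hc'] at c1; linear_combination c1
    · rw [hc, hc, hc', hc'] at b1; linear_combination -b1
    · rw [hc, hc, hc', hc'] at a1; linear_combination a1

set_option maxHeartbeats 1000000 in
/-- The second Lefschetz map is injective for the generic line: `L² q` is not a nontrivial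
combination of the cubics with linear coefficients. -/
theorem lefschetz_two [CharZero K] {B1 B2 B3 : Fin 3 → K} {q : MvPolynomial (Fin 3) K}
    (hA : X 0 * G.comb B1 + X 1 * G.comb B2 + G.L * G.comb B3 = G.L ^ 2 * q) :
    B1 = 0 ∧ B2 = 0 ∧ B3 = 0 := by
  -- If `q = 0`, the relation is a linear syzygy of the cubics themselves.
  have hq0 : q = 0 → B1 = 0 ∧ B2 = 0 ∧ B3 = 0 := by
    intro hq
    have hlin : ∀ u v w : K,
        (X 0 * C u + X 1 * C v + G.L * C w : MvPolynomial (Fin 3) K).IsHomogeneous 1 := by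
      intro u v w
      have hL : G.L.IsHomogeneous 1 :=
        ((isHomogeneous_X K 2).sub ((isHomogeneous_X K 0).C_mul _)).sub
          ((isHomogeneous_X K 1).C_mul _)
      rw [mul_comm (X 0), mul_comm (X 1), mul_comm G.L]
      exact (((isHomogeneous_X K 0).C_mul u).add ((isHomogeneous_X K 1).C_mul v)).add (hL.C_mul w)
    have hdeg : ∀ u v w : K,
        (X 0 * C u + X 1 * C v + G.L * C w : MvPolynomial (Fin 3) K).totalDegree < 3 :=
      fun u v w => (hlin u v w).totalDegree_le.trans_lt (by norm_num)
    have hz : ∀ u v w : K, (X 0 * C u + X 1 * C v + G.L * C w : MvPolynomial (Fin 3) K) = 0 →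
        u = 0 ∧ v = 0 ∧ w = 0 := by
      intro u v w e
      have ev : ∀ s t r : K, s * u + t * v + (r - G.a * s - G.b * t) * w = 0 := fun s t r => by
        have := congrArg (eval ![s, t, r]) e
        simpa [L] using this
      have e1 := ev 0 0 1
      have e2 := ev 1 0 G.a
      have e3 := ev 0 1 G.b
      exact ⟨by linear_combination e2, by linear_combination e3, by linear_combination e1⟩
    have := G.powIn.syz_low G.hom
      (w0 := X 0 * C (B1 0) + X 1 * C (B2 0) + G.L * C (B3 0))
      (w1 := X 0 * C (B1 1) + X 1 * C (B2 1) + G.L * C (B3 1))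
      (w2 := X 0 * C (B1 2) + X 1 * C (B2 2) + G.L * C (B3 2))
      (by rw [hq] at hA; simp only [comb] at hA; linear_combination hA)
      (hdeg _ _ _) (hdeg _ _ _) (hdeg _ _ _)
    obtain ⟨z0, z1, z2⟩ := this
    have z0 := hz _ _ _ z0
    have z1 := hz _ _ _ z1
    have z2 := hz _ _ _ z2
    refine ⟨funext fun i => ?_, funext fun i => ?_, funext fun i => ?_⟩ <;> fin_cases i
    exacts [z0.1, z1.1, z2.1, z0.2.1, z1.2.1, z2.2.1, z0.2.2, z1.2.2, z2.2.2]
  by_cases h0 : B1 = 0 ∧ B2 = 0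
  · refine ⟨h0.1, h0.2, G.combh_eq_zero ?_⟩
    have e : G.comb B3 = G.L * q := mul_left_cancel₀ G.L_ne_zero (by
      rw [h0.1, h0.2] at hA
      simp only [comb, Pi.zero_apply, map_zero, zero_mul, add_zero, mul_zero, zero_add] at hA ⊢
      linear_combination hA)
    rw [← ρ_comb, e, map_mul, ρ_L, zero_mul]
  apply hq0
  have hB : X 0 * G.combh B1 + X 1 * G.combh B2 = 0 := by
    have := congrArg G.ρ hA
    simpa [ρ_comb] using this
  have hAa := congrArg (coeffD G.da) hA
  have hAb := congrArg (coeffD G.db) hA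
  simp only [coeffD_add, coeffD_mul, coeffD_X, da_comb, db_comb, da_L, db_L, pow_two] at hAa hAb
  obtain ⟨c, hc1, hc2⟩ := G.linear_syz_unique (C1 := fun i => G.da (B1 i) - B3 i)
    (C2 := fun i => G.da (B2 i)) hB (by
      have := congrArg G.ρ hAa
      simp only [map_add, map_mul, map_neg, ρ_comb, ρ_L, ρ_X0, ρ_X1, zero_mul, mul_zero, add_zero,
        zero_add] at this
      rw [← this]
      simp only [combh, map_sub]
      ring) h0
  obtain ⟨e, he1, he2⟩ := G.linear_syz_unique (C1 := fun i => G.db (B1 i))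
    (C2 := fun i => G.db (B2 i) - B3 i) hB (by
      have := congrArg G.ρ hAb
      simp only [map_add, map_mul, map_neg, ρ_comb, ρ_L, ρ_X0, ρ_X1, zero_mul, mul_zero, add_zero,
        zero_add] at this
      rw [← this]
      simp only [combh, map_sub]
      ring) h0
  have a1 : ∀ i, G.da (B1 i) = c * B1 i + B3 i := fun i => by linear_combination hc1 i
  have a2 : ∀ i, G.da (B2 i) = c * B2 i := hc2
  have b1 : ∀ i, G.db (B1 i) = e * B1 i := he1
  have b2 : ∀ i, G.db (B2 i) = e * B2 i + B3 i := fun i => by linear_combination he2 i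
  -- The curvature of the logarithmic connection `(c, e)`.
  obtain ⟨γ, hγ⟩ : ∃ γ, γ = G.db c - G.da e := ⟨_, rfl⟩
  have b3 : ∀ i, G.db (B3 i) = e * B3 i - γ * B1 i := fun i => by
    have h3 := G.comm (B1 i)
    simp only [map_add, Derivation.leibniz, smul_eq_mul, a1, b1] at h3
    rw [hγ]
    linear_combination -h3
  have a3 : ∀ i, G.da (B3 i) = c * B3 i + γ * B2 i := fun i => by
    have h3 := G.comm (B2 i)
    simp only [map_add, Derivation.leibniz, smul_eq_mul, a2, b2] at h3
    rw [hγ]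
    linear_combination h3
  have rel : ∀ i, 3 * γ * B3 i + G.da γ * B1 i + G.db γ * B2 i = 0 := fun i => by
    have h3 := G.comm (B3 i)
    simp only [map_add, map_sub, Derivation.leibniz, smul_eq_mul, a3, b3, a1, b2] at h3
    linear_combination -h3 + B3 i * hγ
  by_cases hγ0 : γ = 0
  · refine G.descent c _ 2 q le_rfl (by norm_num) ?_
    refine mul_left_cancel₀ G.L_ne_zero ?_
    simp only [comb, a1, a2, a3, hγ0, map_add, map_mul, map_zero] at hA hAa
    simp only [Nat.cast_ofNat, map_ofNat]
    linear_combination hAa - C c * hA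
  · exfalso
    -- The minors `n` of `(B₁, B₂)` satisfy a rank one connection whose curvature is a nonzero
    -- multiple of `γ`, so commuting derivatives force `n = 0`.
    have minor : ∀ i j, B1 i * B2 j = B1 j * B2 i := by
      intro i j
      obtain ⟨n, hn⟩ : ∃ n, n = B1 i * B2 j - B1 j * B2 i := ⟨_, rfl⟩
      have na : 3 * γ * G.da n = (6 * c * γ - G.da γ) * n := by
        rw [hn]
        simp only [map_sub, Derivation.leibniz, smul_eq_mul, a1, a2]
        linear_combination B2 j * rel i - B2 i * rel j
      have nb : 3 * γ * G.db n = (6 * e * γ - G.db γ) * n := by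
        rw [hn]
        simp only [map_sub, Derivation.leibniz, smul_eq_mul, b1, b2]
        linear_combination B1 i * rel j - B1 j * rel i
      have nab := congrArg G.db na
      have nba := congrArg G.da nb
      have h3 : G.da 3 = 0 := by exact_mod_cast Derivation.map_natCast G.da 3
      have h3' : G.db 3 = 0 := by exact_mod_cast Derivation.map_natCast G.db 3
      have h6 : G.da 6 = 0 := by exact_mod_cast Derivation.map_natCast G.da 6
      have h6' : G.db 6 = 0 := by exact_mod_cast Derivation.map_natCast G.db 6
      simp only [map_sub, Derivation.leibniz, smul_eq_mul, h3, h3', h6, h6'] at nab nba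
      have key : 18 * γ ^ 3 * n = 0 := by
        have cn := G.comm n
        have cγ := G.comm γ
        linear_combination -3 * γ * nab + 3 * γ * nba + (2 * G.db γ + 6 * e * γ) * na
          - (2 * G.da γ + 6 * c * γ) * nb - 9 * γ ^ 2 * cn - 3 * γ * n * cγ
          + 18 * γ ^ 2 * n * hγ
      have hn0 : n = 0 := by simpa [hγ0] using key
      linear_combination hn0 - hn
    exact h0 (G.linear_syz_indep hB (minor 0 1) (minor 0 2) (minor 1 2))

end GenericLine

/-! ### Extending derivations to the fraction field -/

section FractionField

variable {S K : Type*} [CommRing S] [IsDomain S] [Field K] [Algebra S K] [IsFractionRing S K]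

/-- A derivation of a domain extends to its fraction field; the extension is read off from the
extension of the homomorphism `s ↦ s + ε ds` to the dual numbers over the fraction field. -/
theorem exists_derivation_extension (D : S → S) (hadd : ∀ x y, D (x + y) = D x + D y)
    (hmul : ∀ x y, D (x * y) = x * D y + y * D x) :
    ∃ D' : Derivation ℤ K K, ∀ s, D' (algebraMap S K s) = algebraMap S K (D s) := by
  have h0 : D 0 = 0 := by simpa using hadd 0 0
  have h1 : D 1 = 0 := by simpa using hmul 1 1
  let ψ : S →+* TrivSqZeroExt K K :=
    { toFun := fun s =>
        TrivSqZeroExt.inl (algebraMap S K s) + TrivSqZeroExt.inr (algebraMap S K (D s))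
      map_one' := by ext <;> simp [h1]
      map_mul' := fun x y => by
        ext
        · simp
        · simp only [TrivSqZeroExt.snd_add, TrivSqZeroExt.snd_inl, TrivSqZeroExt.snd_inr,
            TrivSqZeroExt.snd_mul, TrivSqZeroExt.fst_add, TrivSqZeroExt.fst_inl,
            TrivSqZeroExt.fst_inr, hmul, map_add, map_mul, zero_add, add_zero, smul_eq_mul,
            MulOpposite.smul_eq_mul_unop, MulOpposite.unop_op]
          ring
      map_zero' := by ext <;> simp [h0]
      map_add' := fun x y => by
        ext
        · simp
        · simp only [TrivSqZeroExt.snd_add, TrivSqZeroExt.snd_inl, TrivSqZeroExt.snd_inr,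
            hadd, map_add, zero_add] }
  have hψ1 : ∀ s, (ψ s).fst = algebraMap S K s := fun s => by
    change (TrivSqZeroExt.inl (algebraMap S K s) +
      TrivSqZeroExt.inr (algebraMap S K (D s)) : TrivSqZeroExt K K).fst = _
    rw [TrivSqZeroExt.fst_add, TrivSqZeroExt.fst_inl, TrivSqZeroExt.fst_inr, add_zero]
  have hψ2 : ∀ s, (ψ s).snd = algebraMap S K (D s) := fun s => by
    change (TrivSqZeroExt.inl (algebraMap S K s) +
      TrivSqZeroExt.inr (algebraMap S K (D s)) : TrivSqZeroExt K K).snd = _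
    rw [TrivSqZeroExt.snd_add, TrivSqZeroExt.snd_inl, TrivSqZeroExt.snd_inr, zero_add]
  have hunit : ∀ y : nonZeroDivisors S, IsUnit (ψ y) := fun y => by
    rw [TrivSqZeroExt.isUnit_iff_isUnit_fst, hψ1, isUnit_iff_ne_zero]
    simp
  let Ψ : K →+* TrivSqZeroExt K K := IsLocalization.lift (M := nonZeroDivisors S) hunit
  have hΨ : ∀ s, Ψ (algebraMap S K s) = ψ s := fun s => IsLocalization.lift_eq hunit s
  have hfst : ∀ x, (Ψ x).fst = x := by
    have : ((TrivSqZeroExt.fstHom K K K : TrivSqZeroExt K K →ₐ[K] K) :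
        TrivSqZeroExt K K →+* K).comp Ψ = RingHom.id K := by
      apply IsLocalization.ringHom_ext (nonZeroDivisors S)
      ext s
      change (Ψ (algebraMap S K s)).fst = algebraMap S K s
      rw [hΨ, hψ1]
    intro x
    exact DFunLike.congr_fun this x
  let D0 : K →+ K :=
    { toFun := fun x => (Ψ x).snd
      map_zero' := by rw [map_zero, TrivSqZeroExt.snd_zero]
      map_add' := fun x y => by rw [map_add, TrivSqZeroExt.snd_add] }
  refine ⟨Derivation.mk' D0.toIntLinearMap (fun x y => ?_), fun s => ?_⟩
  · change (Ψ (x * y)).snd = x * (Ψ y).snd + y * (Ψ x).snd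
    rw [map_mul, TrivSqZeroExt.snd_mul, hfst, hfst, smul_eq_mul, MulOpposite.smul_eq_mul_unop,
      MulOpposite.unop_op, mul_comm y]
  · change (Ψ (algebraMap S K s)).snd = _
    rw [hΨ, hψ2]

theorem derivation_eq_of_algebraMap {D D' : Derivation ℤ K K}
    (h : ∀ s, D (algebraMap S K s) = D' (algebraMap S K s)) : D = D' := by
  ext x
  obtain ⟨s, t, ht, rfl⟩ := IsFractionRing.div_surjective (A := S) x
  have ht' : algebraMap S K t ≠ 0 := by simpa using nonZeroDivisors.ne_zero ht
  have e : ∀ E : Derivation ℤ K K, algebraMap S K t * E (algebraMap S K s / algebraMap S K t) =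
      E (algebraMap S K s) - algebraMap S K s / algebraMap S K t * E (algebraMap S K t) := by
    intro E
    have : algebraMap S K s = algebraMap S K t * (algebraMap S K s / algebraMap S K t) := by
      field_simp
    conv_rhs => rw [this]
    rw [Derivation.leibniz, smul_eq_mul, smul_eq_mul]
    rw [← this]
    ring
  apply mul_left_cancel₀ ht'
  rw [e D, e D', h, h]

theorem exists_commuting_extensions (D E : S → S) (hadd : ∀ x y, D (x + y) = D x + D y)
    (hmul : ∀ x y, D (x * y) = x * D y + y * D x) (hadd' : ∀ x y, E (x + y) = E x + E y)
    (hmul' : ∀ x y, E (x * y) = x * E y + y * E x) (hcomm : ∀ x, D (E x) = E (D x)) :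
    ∃ D' E' : Derivation ℤ K K, (∀ s, D' (algebraMap S K s) = algebraMap S K (D s)) ∧
      (∀ s, E' (algebraMap S K s) = algebraMap S K (E s)) ∧ ∀ x, D' (E' x) = E' (D' x) := by
  obtain ⟨D', hD⟩ := exists_derivation_extension (K := K) D hadd hmul
  obtain ⟨E', hE⟩ := exists_derivation_extension (K := K) E hadd' hmul'
  refine ⟨D', E', hD, hE, fun x => ?_⟩
  have h0 : ⁅D', E'⁆ = 0 := by
    apply derivation_eq_of_algebraMap (S := S)
    intro s
    rw [Derivation.commutator_apply, hD, hE, hD, hE, hcomm, sub_self, Derivation.coe_zero,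
      Pi.zero_apply]
  have := DFunLike.congr_fun h0 x
  rw [Derivation.commutator_apply, Derivation.coe_zero, Pi.zero_apply] at this
  exact sub_eq_zero.1 this

end FractionField

/-- The coordinate ring `ℂ[a, b]` of the parameter plane. -/
abbrev ParamRing : Type := MvPolynomial (Fin 2) ℂ

/-- The function field `ℂ(a, b)` of the parameter plane. -/
abbrev ParamField : Type := FractionRing ParamRing

instance : CharZero ParamField := algebraRat.charZero _

/-- Three complex cubics without common zero, together with the generic line over `ℂ(a, b)`. -/
theorem exists_genericLine {f : Fin 3 → MvPolynomial (Fin 3) ℂ} {N : ℕ}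
    (hom : ∀ i, (f i).IsHomogeneous 3) (hf : PowIn f N) :
    ∃ G : GenericLine ParamField, G.a = algebraMap ParamRing ParamField (X 0) ∧
      G.b = algebraMap ParamRing ParamField (X 1) ∧
      ∀ i, G.f i = map (algebraMap ℂ ParamField) (f i) := by
  obtain ⟨da, db, hda, hdb, hcomm⟩ := exists_commuting_extensions (S := ParamRing)
    (K := ParamField) (fun p => pderiv (0 : Fin 2) p) (fun p => pderiv (1 : Fin 2) p)
    (fun x y => map_add _ x y) (fun x y => Derivation.leibniz _ x y)
    (fun x y => map_add _ x y) (fun x y => Derivation.leibniz _ x y) (fun x => by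
      have h1 : ⁅pderiv (R := ℂ) (0 : Fin 2), pderiv (R := ℂ) (1 : Fin 2)⁆ = 0 := by
        apply MvPolynomial.derivation_ext
        intro i
        rw [Derivation.commutator_apply]
        fin_cases i <;> simp [pderiv_X]
      have h2 := DFunLike.congr_fun h1 x
      rw [Derivation.commutator_apply, Derivation.coe_zero, Pi.zero_apply] at h2
      exact sub_eq_zero.1 h2)
  have hconst : ∀ c : ℂ, algebraMap ℂ ParamField c = algebraMap ParamRing ParamField (C c) :=
    fun c => IsScalarTower.algebraMap_apply ℂ ParamRing ParamField c
  refine ⟨{ da := da, db := db, comm := ?_, a := algebraMap ParamRing ParamField (X 0),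
            b := algebraMap ParamRing ParamField (X 1), da_a := ?_, da_b := ?_, db_a := ?_,
            db_b := ?_, f := fun i => map (algebraMap ℂ ParamField) (f i), hom := ?_, N := N,
            powIn := ?_, da_f := ?_, db_f := ?_ }, rfl, rfl, fun i => rfl⟩
  · exact hcomm
  · rw [hda]; simp
  · rw [hda]; simp [pderiv_X]
  · rw [hdb]; simp [pderiv_X]
  · rw [hdb]; simp
  · exact fun i => (hom i).map _
  · intro i
    obtain ⟨α, hα⟩ := hf i
    exact ⟨fun j => map (algebraMap ℂ ParamField) (α j), by
      simpa using congrArg (map (algebraMap ℂ ParamField)) hα⟩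
  · intro i
    ext m
    rw [coeff_coeffD, coeff_map, hconst, hda]
    simp
  · intro i
    ext m
    rw [coeff_coeffD, coeff_map, hconst, hdb]
    simp

/-! ### Homogeneous polynomials as coefficient vectors -/

/-- Exponent vectors of ternary monomials of degree `d`. -/
abbrev Expo (d : ℕ) : Type := {m : Fin 3 →₀ ℕ // m ∈ Finset.finsuppAntidiag Finset.univ d}

theorem mem_expo {d : ℕ} {m : Fin 3 →₀ ℕ} :
    m ∈ Finset.finsuppAntidiag Finset.univ d ↔ m.degree = d := by
  rw [Finset.mem_finsuppAntidiag, Finsupp.degree_eq_sum]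
  simp

theorem card_expo (d : ℕ) : Fintype.card (Expo d) = (d + 2).choose 2 := by
  rw [Fintype.card_coe, Finset.card_finsuppAntidiag_nat_eq_choose, Finset.card_univ,
    Fintype.card_fin, show 3 + d - 1 = d + 2 by omega]
  exact Nat.choose_symm_of_eq_add rfl

/-- The form of degree `d` with prescribed coefficients. -/
noncomputable def polyOf {k : Type*} [CommRing k] {d : ℕ} (c : Expo d → k) :
    MvPolynomial (Fin 3) k :=
  ∑ m, monomial m.1 (c m)

theorem polyOf_hom {k : Type*} [CommRing k] {d : ℕ} (c : Expo d → k) :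
    (polyOf c).IsHomogeneous d :=
  IsHomogeneous.sum _ _ _ fun m _ => isHomogeneous_monomial _ (mem_expo.1 m.2)

theorem coeff_polyOf {k : Type*} [CommRing k] {d : ℕ} (c : Expo d → k) (m : Expo d) :
    coeff m.1 (polyOf c) = c m := by
  classical
  rw [polyOf, coeff_sum]
  simp only [coeff_monomial]
  rw [Finset.sum_eq_single m]
  · simp
  · intro b _ hb
    rw [if_neg]
    exact fun e => hb (Subtype.ext e)
  · simp

theorem hom_ext {k : Type*} [CommRing k] {d : ℕ} {p q : MvPolynomial (Fin 3) k}
    (hp : p.IsHomogeneous d) (hq : q.IsHomogeneous d)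
    (h : ∀ m : Expo d, coeff m.1 p = coeff m.1 q) : p = q := by
  ext m
  by_cases hm : m.degree = d
  · exact h ⟨m, mem_expo.2 hm⟩
  · rw [hp.coeff_eq_zero hm, hq.coeff_eq_zero hm]

theorem polyOf_coeff {k : Type*} [CommRing k] {d : ℕ} {p : MvPolynomial (Fin 3) k}
    (hp : p.IsHomogeneous d) : polyOf (fun m : Expo d => coeff m.1 p) = p :=
  hom_ext (polyOf_hom _) hp fun m => coeff_polyOf _ m

section Family

variable {k ι : Type*} [Fintype ι] {d : ℕ}

theorem hom_family_sum [CommRing k] {g : ι → MvPolynomial (Fin 3) k}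
    (hg : ∀ i, (g i).IsHomogeneous d) (c : ι → k) :
    (∑ i, C (c i) * g i).IsHomogeneous d :=
  IsHomogeneous.sum _ _ _ fun i _ => (hg i).C_mul _

theorem coeff_family_sum [CommRing k] (g : ι → MvPolynomial (Fin 3) k) (c : ι → k)
    (m : Fin 3 →₀ ℕ) : coeff m (∑ i, C (c i) * g i) = ∑ i, coeff m (g i) * c i := by
  rw [coeff_sum]
  exact Finset.sum_congr rfl fun i _ => by rw [coeff_C_mul, mul_comm]

/-- An independent family of forms with as many members as there are monomials is spanning. -/
theorem family_surjective [Field k] {g : ι → MvPolynomial (Fin 3) k}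
    (hg : ∀ i, (g i).IsHomogeneous d) (hcard : Fintype.card ι = (d + 2).choose 2)
    (hinj : ∀ c : ι → k, ∑ i, C (c i) * g i = 0 → c = 0) {p : MvPolynomial (Fin 3) k}
    (hp : p.IsHomogeneous d) : ∃ c : ι → k, ∑ i, C (c i) * g i = p := by
  let M : Matrix (Expo d) ι k := fun m i => coeff m.1 (g i)
  have hM : ∀ c m, M.mulVecLin c m = coeff m.1 (∑ i, C (c i) * g i) := fun c m => by
    rw [coeff_family_sum]
    rfl
  have hsurj : Function.Surjective M.mulVecLin := by
    rw [← LinearMap.injective_iff_surjective_of_finrank_eq_finrank]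
    · rw [injective_iff_map_eq_zero]
      intro c hc
      refine hinj c (hom_ext (hom_family_sum hg c) (isHomogeneous_zero _ _ _) fun m => ?_)
      rw [← hM, hc, coeff_zero, Pi.zero_apply]
    · rw [Module.finrank_fintype_fun_eq_card, Module.finrank_fintype_fun_eq_card, hcard, card_expo]
  obtain ⟨c, hc⟩ := hsurj fun m => coeff m.1 p
  exact ⟨c, hom_ext (hom_family_sum hg c) hp fun m => by rw [← hM, hc]⟩

/-- A family of forms with parameters which is generically independent is independent at all
parameters outside a proper closed subset. -/
theorem specialize_independent {g : ι → MvPolynomial (Fin 3) ParamRing}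
    (hg : ∀ i, (g i).IsHomogeneous d) (hcard : Fintype.card ι = (d + 2).choose 2)
    (hinj : ∀ c : ι → ParamRing, ∑ i, C (c i) * g i = 0 → c = 0) :
    ∃ D : ParamRing, D ≠ 0 ∧ ∀ pt : Fin 2 → ℂ, eval pt D ≠ 0 →
      ∀ c : ι → ℂ, ∑ i, C (c i) * map (eval pt) (g i) = 0 → c = 0 := by
  classical
  let e : ι ≃ Expo d := Fintype.equivOfCardEq (by rw [hcard, card_expo])
  let M : Matrix ι ι ParamRing := fun j i => coeff (e j).1 (g i)
  refine ⟨M.det, fun h0 => ?_, fun pt hpt c hc => ?_⟩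
  · obtain ⟨v, hv0, hv⟩ := Matrix.exists_mulVec_eq_zero_iff.2 h0
    refine hv0 (hinj v (hom_ext (hom_family_sum hg v) (isHomogeneous_zero _ _ _) fun m => ?_))
    rw [coeff_family_sum, coeff_zero]
    have := congrFun hv (e.symm m)
    simpa [Matrix.mulVec, dotProduct, M] using this
  · by_contra hc0
    rw [RingHom.map_det] at hpt
    refine hpt (Matrix.exists_mulVec_eq_zero_iff.1 ⟨c, hc0, ?_⟩)
    funext j
    have := congrArg (coeff (e j).1) hc
    rw [coeff_family_sum, coeff_zero] at this
    simp only [coeff_map] at this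
    exact this

end Family

/-! ### Homogeneous elements of the ideal -/

theorem homogeneousComponent_mul_hom {σ k : Type*} [CommRing k] {f : MvPolynomial σ k} {e : ℕ}
    (hf : f.IsHomogeneous e) (n : ℕ) (a : MvPolynomial σ k) :
    homogeneousComponent (n + e) (a * f) = homogeneousComponent n a * f := by
  conv_lhs => rw [← sum_homogeneousComponent a, Finset.sum_mul, map_sum]
  have h : ∀ i, homogeneousComponent (n + e) (homogeneousComponent i a * f) =
      if i = n then homogeneousComponent n a * f else 0 := by
    intro i
    rw [homogeneousComponent_of_mem (((homogeneousComponent_isHomogeneous i a).mul hf))]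
    by_cases hi : i = n
    · subst hi; simp
    · rw [if_neg (by omega), if_neg hi]
  rw [Finset.sum_congr rfl fun i _ => h i, Finset.sum_ite_eq']
  split_ifs with hn
  · rfl
  · rw [homogeneousComponent_eq_zero, zero_mul]
    simpa [Nat.lt_succ_iff] using hn

theorem mem_span_hom {f : Fin 3 → MvPolynomial (Fin 3) ℂ} (hf : ∀ i, (f i).IsHomogeneous 3)
    {n : ℕ} {p : MvPolynomial (Fin 3) ℂ} (hp : p.IsHomogeneous (n + 3))
    (hpJ : p ∈ Ideal.span (Set.range f)) :
    ∃ A : Fin 3 → MvPolynomial (Fin 3) ℂ, (∀ i, (A i).IsHomogeneous n) ∧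
      p = A 0 * f 0 + A 1 * f 1 + A 2 * f 2 := by
  obtain ⟨c, hc⟩ := Ideal.mem_span_range_iff_exists_fun.1 hpJ
  refine ⟨fun i => homogeneousComponent n (c i), fun i => homogeneousComponent_isHomogeneous _ _, ?_⟩
  have h := congrArg (homogeneousComponent (n + 3)) hc
  rw [homogeneousComponent_of_mem hp, if_pos rfl, Fin.sum_univ_three, map_add, map_add] at h
  simp only [homogeneousComponent_mul_hom (hf _)] at h
  exact h.symm

theorem comb_mem_span (f A : Fin 3 → MvPolynomial (Fin 3) ℂ) :
    A 0 * f 0 + A 1 * f 1 + A 2 * f 2 ∈ Ideal.span (Set.range f) := by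
  have : ∀ i, f i ∈ Ideal.span (Set.range f) := fun i => Ideal.subset_span ⟨i, rfl⟩
  exact add_mem (add_mem (Ideal.mul_mem_left _ _ (this 0)) (Ideal.mul_mem_left _ _ (this 1)))
    (Ideal.mul_mem_left _ _ (this 2))

theorem homogeneousComponent_mem_span {f : Fin 3 → MvPolynomial (Fin 3) ℂ}
    (hf : ∀ i, (f i).IsHomogeneous 3) (d : ℕ) {p : MvPolynomial (Fin 3) ℂ}
    (hpJ : p ∈ Ideal.span (Set.range f)) :
    homogeneousComponent d p ∈ Ideal.span (Set.range f) := by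
  let _ := gradedAlgebra (σ := Fin 3) (R := ℂ)
  refine homogeneousComponent_mem_of_mem (Ideal.homogeneous_span _ _ ?_) hpJ d
  rintro _ ⟨i, rfl⟩
  exact ⟨3, hf i⟩

theorem eq_zero_of_mem_span {f : Fin 3 → MvPolynomial (Fin 3) ℂ} (hf : ∀ i, (f i).IsHomogeneous 3)
    {n : ℕ} (hn : n < 3) {p : MvPolynomial (Fin 3) ℂ} (hp : p.IsHomogeneous n)
    (hpJ : p ∈ Ideal.span (Set.range f)) : p = 0 := by
  obtain ⟨c, hc⟩ := Ideal.mem_span_range_iff_exists_fun.1 hpJ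
  refine eq_zero_of_coeff_of_totalDegree (hp.totalDegree_le.trans_lt hn) fun m hm => ?_
  rw [← hc, coeff_sum]
  refine Finset.sum_eq_zero fun i _ => ?_
  rw [mul_comm]
  exact coeff_mul_eq_zero_of_hom (hf i) _ hm

/-! ### The second Lefschetz map -/

/-- The linear form `z - a x - b y`. -/
noncomputable def line {k : Type*} [CommRing k] (a b : k) : MvPolynomial (Fin 3) k :=
  X 2 - C a * X 0 - C b * X 1

theorem line_hom {k : Type*} [CommRing k] (a b : k) : (line a b).IsHomogeneous 1 :=
  ((isHomogeneous_X k 2).sub ((isHomogeneous_X k 0).C_mul _)).sub ((isHomogeneous_X k 1).C_mul _)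

theorem map_line {k k' : Type*} [CommRing k] [CommRing k'] (φ : k →+* k') (a b : k) :
    map φ (line a b) = line (φ a) (φ b) := by
  simp [line]

/-- The family of quartic forms `x fᵢ`, `y fᵢ`, `L fᵢ`, `L² m` (with `m` a quadratic monomial),
which spans `J₄ + L² R₂`. -/
noncomputable def quarticFamily {k : Type*} [CommRing k] (a b : k)
    (f : Fin 3 → MvPolynomial (Fin 3) k) : (Fin 3 × Fin 3) ⊕ Expo 2 → MvPolynomial (Fin 3) k
  | .inl (j, i) => ![X 0, X 1, line a b] j * f i
  | .inr m => line a b ^ 2 * monomial m.1 1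

section QuarticFamily

variable {k : Type*} [CommRing k] (a b : k) (f : Fin 3 → MvPolynomial (Fin 3) k)

theorem quarticFamily_hom (hf : ∀ i, (f i).IsHomogeneous 3) (s : (Fin 3 × Fin 3) ⊕ Expo 2) :
    (quarticFamily a b f s).IsHomogeneous 4 := by
  rcases s with ⟨j, i⟩ | m
  · have h : (![X 0, X 1, line a b] j).IsHomogeneous 1 := by
      fin_cases j
      exacts [isHomogeneous_X _ _, isHomogeneous_X _ _, line_hom _ _]
    exact h.mul (hf i)
  · exact ((line_hom a b).pow 2).mul (isHomogeneous_monomial (1 : k) (mem_expo.1 m.2))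

theorem quarticFamily_map {k' : Type*} [CommRing k'] (φ : k →+* k')
    (s : (Fin 3 × Fin 3) ⊕ Expo 2) :
    map φ (quarticFamily a b f s) = quarticFamily (φ a) (φ b) (fun i => map φ (f i)) s := by
  rcases s with ⟨j, i⟩ | m
  · fin_cases j <;> simp [quarticFamily, map_line]
  · simp [quarticFamily, map_line, map_monomial]

theorem quarticFamily_sum (c : (Fin 3 × Fin 3) ⊕ Expo 2 → k) :
    ∑ s, C (c s) * quarticFamily a b f s =
      X 0 * (C (c (.inl (0, 0))) * f 0 + C (c (.inl (0, 1))) * f 1 + C (c (.inl (0, 2))) * f 2)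
      + X 1 * (C (c (.inl (1, 0))) * f 0 + C (c (.inl (1, 1))) * f 1 + C (c (.inl (1, 2))) * f 2)
      + line a b * (C (c (.inl (2, 0))) * f 0 + C (c (.inl (2, 1))) * f 1
        + C (c (.inl (2, 2))) * f 2)
      + line a b ^ 2 * polyOf (fun m => c (.inr m)) := by
  rw [Fintype.sum_sum_type, Fintype.sum_prod_type]
  simp only [Fin.sum_univ_three, quarticFamily, polyOf, Finset.mul_sum]
  congr 1
  · simp only [Matrix.cons_val_zero, Matrix.cons_val_one, Matrix.cons_val]
    ring
  · refine Finset.sum_congr rfl fun m _ => ?_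
    rw [mul_left_comm, C_mul_monomial, mul_one]

end QuarticFamily

/-- Over the function field of the parameter plane the quartic family is independent. -/
theorem quarticFamily_generic {f : Fin 3 → MvPolynomial (Fin 3) ℂ} {N : ℕ}
    (hom : ∀ i, (f i).IsHomogeneous 3) (hf : PowIn f N)
    (c : (Fin 3 × Fin 3) ⊕ Expo 2 → ParamRing)
    (hc : ∑ s, C (c s) * quarticFamily (X 0 : ParamRing) (X 1) (fun i => map C (f i)) s = 0) :
    c = 0 := by
  obtain ⟨G, ha, hb, hGf⟩ := exists_genericLine hom hf
  let φ : ParamRing →+* ParamField := algebraMap ParamRing ParamField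
  have hφ : Function.Injective φ := IsFractionRing.injective ParamRing ParamField
  have h1 := congrArg (map φ) hc
  rw [map_sum, map_zero] at h1
  simp only [map_mul, map_C, quarticFamily_map] at h1
  rw [quarticFamily_sum (c := fun s => φ (c s))] at h1
  have hff : ∀ i, map φ (map C (f i)) = G.f i := fun i => by
    rw [hGf, map_map]
    rfl
  have hL : line (φ (X 0)) (φ (X 1)) = G.L := by
    rw [GenericLine.L, ha, hb]
    rfl
  simp only [hff, hL] at h1
  have h2 := G.lefschetz_two (B1 := fun i => φ (c (.inl (0, i))))
    (B2 := fun i => φ (c (.inl (1, i)))) (B3 := fun i => φ (c (.inl (2, i))))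
    (q := - polyOf (fun m => φ (c (.inr m)))) (by
      simp only [GenericLine.comb]
      linear_combination h1)
  obtain ⟨e1, e2, e3⟩ := h2
  have z : ∀ j i, φ (c (.inl (j, i))) = 0 := by
    intro j i
    fin_cases j
    · exact congrFun e1 i
    · exact congrFun e2 i
    · exact congrFun e3 i
  simp only [z, map_zero, zero_mul, add_zero, mul_zero, zero_add] at h1
  have h3 := (mul_eq_zero.1 h1).resolve_left (pow_ne_zero 2 G.L_ne_zero)
  funext s
  apply hφ
  rw [Pi.zero_apply, map_zero]
  rcases s with ⟨j, i⟩ | m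
  · exact z j i
  · rw [← coeff_polyOf (fun m => φ (c (.inr m))) m, h3, coeff_zero]

theorem linear_eq {p : MvPolynomial (Fin 3) ℂ} (hp : p.IsHomogeneous 1) (a b : ℂ) :
    ∃ u v w : ℂ, p = C u * X 0 + C v * X 1 + C w * line a b := by
  have h := (mem_homogeneousSubmodule 1 p).2 hp
  rw [homogeneousSubmodule_one_eq_span_X, Submodule.mem_span_range_iff_exists_fun] at h
  obtain ⟨c, hc⟩ := h
  refine ⟨c 0 + c 2 * a, c 1 + c 2 * b, c 2, ?_⟩
  rw [← hc, Fin.sum_univ_three]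
  simp only [smul_eq_C_mul, line, map_add, map_mul]
  ring

/-- For the lines outside a proper closed subset, multiplication by `L²` is an isomorphism
`A₂ → A₄`. -/
theorem lefschetz_two_point {f : Fin 3 → MvPolynomial (Fin 3) ℂ} {N : ℕ}
    (hom : ∀ i, (f i).IsHomogeneous 3) (hf : PowIn f N) :
    ∃ D : ParamRing, D ≠ 0 ∧ ∀ pt : Fin 2 → ℂ, eval pt D ≠ 0 →
      (∀ q : MvPolynomial (Fin 3) ℂ, q.IsHomogeneous 2 →
        line (pt 0) (pt 1) ^ 2 * q ∈ Ideal.span (Set.range f) → q = 0) ∧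
      (∀ p : MvPolynomial (Fin 3) ℂ, p.IsHomogeneous 4 → ∃ q : MvPolynomial (Fin 3) ℂ,
        q.IsHomogeneous 2 ∧ p - line (pt 0) (pt 1) ^ 2 * q ∈ Ideal.span (Set.range f)) := by
  have hcard : Fintype.card ((Fin 3 × Fin 3) ⊕ Expo 2) = (4 + 2).choose 2 := by
    rw [Fintype.card_sum, Fintype.card_prod, card_expo]
    rfl
  obtain ⟨D, hD0, hD⟩ := specialize_independent
    (quarticFamily_hom (X 0 : ParamRing) (X 1) (fun i => map C (f i)) fun i => (hom i).map _)
    hcard (quarticFamily_generic hom hf)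
  refine ⟨D, hD0, fun pt hpt => ?_⟩
  have hff : ∀ i, map (eval pt) (map C (f i)) = f i := fun i => by
    rw [map_map, show (eval pt).comp C = RingHom.id ℂ from by ext; simp, map_id]
  have hinj : ∀ c : (Fin 3 × Fin 3) ⊕ Expo 2 → ℂ,
      ∑ s, C (c s) * quarticFamily (pt 0) (pt 1) f s = 0 → c = 0 := by
    intro c hc
    refine hD pt hpt c ?_
    simpa only [quarticFamily_map, hff, eval_X] using hc
  refine ⟨fun q hq hqJ => ?_, fun p hp => ?_⟩
  · obtain ⟨A, hA, hAe⟩ := mem_span_hom hom (n := 1)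
      (((line_hom (pt 0) (pt 1)).pow 2).mul hq) hqJ
    choose u v w huvw using fun i => linear_eq (hA i) (pt 0) (pt 1)
    let c : (Fin 3 × Fin 3) ⊕ Expo 2 → ℂ :=
      Sum.elim (fun s => - ![u s.2, v s.2, w s.2] s.1) fun m => coeff m.1 q
    have h0 := hinj c (by
      rw [quarticFamily_sum]
      simp only [c, Sum.elim_inl, Sum.elim_inr, polyOf_coeff hq, Matrix.cons_val_zero,
        Matrix.cons_val_one, Matrix.cons_val, map_neg]
      rw [hAe, huvw 0, huvw 1, huvw 2]
      ring)
    refine hom_ext hq (isHomogeneous_zero _ _ _) fun m => ?_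
    exact congrFun h0 (.inr m)
  · obtain ⟨c, hc⟩ := family_surjective (quarticFamily_hom (pt 0) (pt 1) f hom) hcard hinj hp
    rw [quarticFamily_sum] at hc
    refine ⟨_, polyOf_hom fun m => c (.inr m), ?_⟩
    have e := comb_mem_span f (fun i => X 0 * C (c (.inl (0, i))) + X 1 * C (c (.inl (1, i)))
      + line (pt 0) (pt 1) * C (c (.inl (2, i))))
    convert e using 1
    rw [← hc]
    ring

/-! ### The Nullstellensatz and the socle -/

theorem exists_powIn {f : Fin 3 → MvPolynomial (Fin 3) ℂ}
    (hsm : ∀ x : Fin 3 → ℂ, x ≠ 0 → ∃ i : Fin 3, eval x (f i) ≠ 0) : ∃ N, PowIn f N := by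
  have hrad : ∀ i : Fin 3, ∃ n, (X i : MvPolynomial (Fin 3) ℂ) ^ n ∈ Ideal.span (Set.range f) := by
    intro i
    rw [← Ideal.mem_radical_iff, ← vanishingIdeal_zeroLocus_eq_radical (K := ℂ)]
    intro x hx
    by_cases hx0 : x = 0
    · simp [hx0]
    · obtain ⟨j, hj⟩ := hsm x hx0
      exact absurd (hx (f j) (Ideal.subset_span ⟨j, rfl⟩)) (by simpa [aeval_eq_eval] using hj)
  choose n hn using hrad
  refine ⟨n 0 + n 1 + n 2, fun i => ?_⟩
  have hi : (X i : MvPolynomial (Fin 3) ℂ) ^ (n 0 + n 1 + n 2) ∈ Ideal.span (Set.range f) := by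
    refine Ideal.pow_mem_of_pow_mem _ (hn i) ?_
    fin_cases i <;> simp <;> omega
  obtain ⟨c, hc⟩ := Ideal.mem_span_range_iff_exists_fun.1 hi
  exact ⟨c, by rw [← hc, Fin.sum_univ_three]⟩

theorem powIn_X {k : Type*} [Field k] : PowIn (X : Fin 3 → MvPolynomial (Fin 3) k) 1 := by
  intro i
  refine ⟨Pi.single i 1, ?_⟩
  fin_cases i <;> simp

/-- The socle of `R ⧸ (f₀, f₁, f₂)` is generated by the determinant of any matrix `Φ` with
`f = X Φ`: this is the comparison of the Koszul complexes of `f` and of `X`, run by hand. -/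
theorem socle_eq {k : Type*} [Field k] {f : Fin 3 → MvPolynomial (Fin 3) k} {N : ℕ}
    (hf : PowIn f N) (Φ : Fin 3 → Fin 3 → MvPolynomial (Fin 3) k)
    (hΦ : ∀ l, f l = X 0 * Φ 0 l + X 1 * Φ 1 l + X 2 * Φ 2 l)
    {u : MvPolynomial (Fin 3) k} (m : Fin 3 → Fin 3 → MvPolynomial (Fin 3) k)
    (hm : ∀ j, X j * u = m j 0 * f 0 + m j 1 * f 1 + m j 2 * f 2) :
    ∃ s, ∃ n : Fin 3 → MvPolynomial (Fin 3) k,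
      u = n 0 * f 0 + n 1 * f 1 + n 2 * f 2 - s * (Matrix.of Φ).det := by
  obtain ⟨a0, a1, a2, ha0, ha1, ha2⟩ := hf.syz (w0 := X 1 * m 2 0 - X 2 * m 1 0)
    (w1 := X 1 * m 2 1 - X 2 * m 1 1) (w2 := X 1 * m 2 2 - X 2 * m 1 2)
    (by linear_combination X 2 * hm 1 - X 1 * hm 2)
  obtain ⟨b0, b1, b2, hb0, hb1, hb2⟩ := hf.syz (w0 := X 2 * m 0 0 - X 0 * m 2 0)
    (w1 := X 2 * m 0 1 - X 0 * m 2 1) (w2 := X 2 * m 0 2 - X 0 * m 2 2)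
    (by linear_combination X 0 * hm 2 - X 2 * hm 0)
  obtain ⟨c0, c1, c2, hc0, hc1, hc2⟩ := hf.syz (w0 := X 0 * m 1 0 - X 1 * m 0 0)
    (w1 := X 0 * m 1 1 - X 1 * m 0 1) (w2 := X 0 * m 1 2 - X 1 * m 0 2)
    (by linear_combination X 1 * hm 0 - X 0 * hm 1)
  obtain ⟨s, hs0, hs1, hs2⟩ := hf.parallel (i := 0) (j := 1) (by decide)
    (v0 := X 0 * a0 + X 1 * b0 + X 2 * c0) (v1 := X 0 * a1 + X 1 * b1 + X 2 * c1)
    (v2 := X 0 * a2 + X 1 * b2 + X 2 * c2)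
    (by linear_combination -(X 0 * ha2 + X 1 * hb2 + X 2 * hc2))
    (by linear_combination X 0 * ha1 + X 1 * hb1 + X 2 * hc1)
    (by linear_combination -(X 0 * ha0 + X 1 * hb0 + X 2 * hc0))
  obtain ⟨p0, p1, p2, hp0, hp1, hp2⟩ := (powIn_X (k := k)).syz (w0 := a0 - s * Φ 0 0)
    (w1 := b0 - s * Φ 1 0) (w2 := c0 - s * Φ 2 0) (by linear_combination hs0 + s * hΦ 0)
  obtain ⟨q0, q1, q2, hq0, hq1, hq2⟩ := (powIn_X (k := k)).syz (w0 := a1 - s * Φ 0 1)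
    (w1 := b1 - s * Φ 1 1) (w2 := c1 - s * Φ 2 1) (by linear_combination hs1 + s * hΦ 1)
  obtain ⟨r0, r1, r2, hr0, hr1, hr2⟩ := (powIn_X (k := k)).syz (w0 := a2 - s * Φ 0 2)
    (w1 := b2 - s * Φ 1 2) (w2 := c2 - s * Φ 2 2) (by linear_combination hs2 + s * hΦ 2)
  -- The corrected vectors `m_i - f × W_i + s Φ_j × Φ_k` are parallel to `X`.
  obtain ⟨n0, -, -, hn0⟩ := (powIn_X (k := k)).parallel (i := 0) (j := 1) (by decide)
    (v0 := m 0 0 - (f 1 * r0 - f 2 * q0) + s * (Φ 1 1 * Φ 2 2 - Φ 1 2 * Φ 2 1))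
    (v1 := m 1 0 - (f 1 * r1 - f 2 * q1) + s * (Φ 2 1 * Φ 0 2 - Φ 2 2 * Φ 0 1))
    (v2 := m 2 0 - (f 1 * r2 - f 2 * q2) + s * (Φ 0 1 * Φ 1 2 - Φ 0 2 * Φ 1 1))
    (by linear_combination hc0 + f 1 * hr2 - f 2 * hq2 + s * Φ 2 2 * hΦ 1 - s * Φ 2 1 * hΦ 2)
    (by linear_combination -hb0 - f 1 * hr1 + f 2 * hq1 - s * Φ 1 2 * hΦ 1 + s * Φ 1 1 * hΦ 2)
    (by linear_combination ha0 + f 1 * hr0 - f 2 * hq0 + s * Φ 0 2 * hΦ 1 - s * Φ 0 1 * hΦ 2)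
  obtain ⟨n1, -, -, hn1⟩ := (powIn_X (k := k)).parallel (i := 0) (j := 1) (by decide)
    (v0 := m 0 1 - (f 2 * p0 - f 0 * r0) + s * (Φ 1 2 * Φ 2 0 - Φ 1 0 * Φ 2 2))
    (v1 := m 1 1 - (f 2 * p1 - f 0 * r1) + s * (Φ 2 2 * Φ 0 0 - Φ 2 0 * Φ 0 2))
    (v2 := m 2 1 - (f 2 * p2 - f 0 * r2) + s * (Φ 0 2 * Φ 1 0 - Φ 0 0 * Φ 1 2))
    (by linear_combination hc1 + f 2 * hp2 - f 0 * hr2 + s * Φ 2 0 * hΦ 2 - s * Φ 2 2 * hΦ 0)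
    (by linear_combination -hb1 - f 2 * hp1 + f 0 * hr1 - s * Φ 1 0 * hΦ 2 + s * Φ 1 2 * hΦ 0)
    (by linear_combination ha1 + f 2 * hp0 - f 0 * hr0 + s * Φ 0 0 * hΦ 2 - s * Φ 0 2 * hΦ 0)
  obtain ⟨n2, -, -, hn2⟩ := (powIn_X (k := k)).parallel (i := 0) (j := 1) (by decide)
    (v0 := m 0 2 - (f 0 * q0 - f 1 * p0) + s * (Φ 1 0 * Φ 2 1 - Φ 1 1 * Φ 2 0))
    (v1 := m 1 2 - (f 0 * q1 - f 1 * p1) + s * (Φ 2 0 * Φ 0 1 - Φ 2 1 * Φ 0 0))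
    (v2 := m 2 2 - (f 0 * q2 - f 1 * p2) + s * (Φ 0 0 * Φ 1 1 - Φ 0 1 * Φ 1 0))
    (by linear_combination hc2 + f 0 * hq2 - f 1 * hp2 + s * Φ 2 1 * hΦ 0 - s * Φ 2 0 * hΦ 1)
    (by linear_combination -hb2 - f 0 * hq1 + f 1 * hp1 - s * Φ 1 1 * hΦ 0 + s * Φ 1 0 * hΦ 1)
    (by linear_combination ha2 + f 0 * hq0 - f 1 * hp0 + s * Φ 0 1 * hΦ 0 - s * Φ 0 0 * hΦ 1)
  refine ⟨s, ![n0, n1, n2], mul_left_cancel₀ (X_ne_zero (R := k) (2 : Fin 3)) ?_⟩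
  rw [Matrix.det_fin_three]
  simp only [Matrix.of_apply, Matrix.cons_val]
  linear_combination hm 2 + f 0 * hn0 + f 1 * hn1 + f 2 * hn2
    - s * (Φ 0 1 * Φ 1 2 - Φ 0 2 * Φ 1 1) * hΦ 0
    - s * (Φ 0 2 * Φ 1 0 - Φ 0 0 * Φ 1 2) * hΦ 1
    - s * (Φ 0 0 * Φ 1 1 - Φ 0 1 * Φ 1 0) * hΦ 2

theorem socle_low {f : Fin 3 → MvPolynomial (Fin 3) ℂ} {N : ℕ}
    (hhom : ∀ i, (f i).IsHomogeneous 3) (hf : PowIn f N) {d : ℕ} (hd : d < 6)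
    {u : MvPolynomial (Fin 3) ℂ} (hu : u.IsHomogeneous d)
    (hX : ∀ j, X j * u ∈ Ideal.span (Set.range f)) : u ∈ Ideal.span (Set.range f) := by
  let Φ : Fin 3 → Fin 3 → MvPolynomial (Fin 3) ℂ := fun i l => C (1 / 3) * pderiv i (f l)
  have hΦhom : ∀ i l, (Φ i l).IsHomogeneous 2 := fun i l => (hhom l).pderiv.C_mul _
  have hΦ : ∀ l, f l = X 0 * Φ 0 l + X 1 * Φ 1 l + X 2 * Φ 2 l := by
    intro l
    have h := (hhom l).sum_X_mul_pderiv
    rw [Fin.sum_univ_three] at h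
    have h3 : (C (1 / 3) : MvPolynomial (Fin 3) ℂ) * 3 = 1 := by
      rw [show (3 : MvPolynomial (Fin 3) ℂ) = C 3 from rfl, ← C_mul]; norm_num
    simp only [nsmul_eq_mul, Nat.cast_ofNat] at h
    linear_combination (-C (1 / 3)) * h - f l * h3
  have hdet : (Matrix.of Φ).det.IsHomogeneous 6 := by
    rw [Matrix.det_fin_three]
    simp only [Matrix.of_apply]
    have h : ∀ i j l i' j' l', (Φ i i' * Φ j j' * Φ l l').IsHomogeneous 6 := fun _ _ _ _ _ _ =>
      ((hΦhom _ _).mul (hΦhom _ _)).mul (hΦhom _ _)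
    exact (((((h _ _ _ _ _ _).sub (h _ _ _ _ _ _)).sub (h _ _ _ _ _ _)).add
      (h _ _ _ _ _ _)).add (h _ _ _ _ _ _)).sub (h _ _ _ _ _ _)
  have hm : ∀ j, ∃ m : Fin 3 → MvPolynomial (Fin 3) ℂ,
      X j * u = m 0 * f 0 + m 1 * f 1 + m 2 * f 2 := by
    intro j
    obtain ⟨c, hc⟩ := Ideal.mem_span_range_iff_exists_fun.1 (hX j)
    exact ⟨c, by rw [← hc, Fin.sum_univ_three]⟩
  choose m hm using hm
  obtain ⟨s, n, hn⟩ := socle_eq hf Φ hΦ m hm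
  have h := homogeneousComponent_mem_span hhom d (comb_mem_span f n)
  have h0 : homogeneousComponent d (s * (Matrix.of Φ).det) = 0 := by
    ext e
    rw [coeff_homogeneousComponent, coeff_zero]
    split_ifs with he
    · rw [mul_comm]; exact coeff_mul_eq_zero_of_hom hdet s (by omega)
    · rfl
  rwa [show n 0 * f 0 + n 1 * f 1 + n 2 * f 2 = u + s * (Matrix.of Φ).det by rw [hn]; ring,
    map_add, h0, add_zero, homogeneousComponent_of_mem hu, if_pos rfl] at h

/-- A linear form annihilating all quintics modulo the ideal vanishes. -/
theorem linear_eq_zero_of_socle {f : Fin 3 → MvPolynomial (Fin 3) ℂ} {N : ℕ}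
    (hhom : ∀ i, (f i).IsHomogeneous 3) (hf : PowIn f N)
    {c : MvPolynomial (Fin 3) ℂ} (hc : c.IsHomogeneous 1)
    (h5 : ∀ p : MvPolynomial (Fin 3) ℂ, p.IsHomogeneous 5 → p * c ∈ Ideal.span (Set.range f)) :
    c = 0 := by
  have step : ∀ d, d < 5 →
      (∀ p : MvPolynomial (Fin 3) ℂ, p.IsHomogeneous (d + 1) → p * c ∈ Ideal.span (Set.range f)) →
      ∀ p : MvPolynomial (Fin 3) ℂ, p.IsHomogeneous d → p * c ∈ Ideal.span (Set.range f) := by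
    intro d hd h p hp
    refine socle_low hhom hf (d := d + 1) (by omega) (hp.mul hc) fun j => ?_
    rw [← mul_assoc]
    exact h _ (by rw [add_comm]; exact (isHomogeneous_X _ _).mul hp)
  have h0 := step 0 (by norm_num) <| step 1 (by norm_num) <| step 2 (by norm_num) <|
    step 3 (by norm_num) <| step 4 (by norm_num) h5
  exact eq_zero_of_mem_span hhom (n := 1) (by norm_num) hc
    (by simpa using h0 1 (isHomogeneous_one _ _))

/-! ### The top degree of the quotient -/

/-- The coefficient vector of the degree `d` part of a ternary polynomial. -/
noncomputable def coeffVec (d : ℕ) : MvPolynomial (Fin 3) ℂ →ₗ[ℂ] (Expo d → ℂ) :=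
  LinearMap.pi fun m => lcoeff ℂ m.1

theorem coeffVec_apply {d : ℕ} (p : MvPolynomial (Fin 3) ℂ) (m : Expo d) :
    coeffVec d p m = coeff m.1 p := rfl

/-- `polyOf` as a linear map. -/
noncomputable def polyOfLin (d : ℕ) : (Expo d → ℂ) →ₗ[ℂ] MvPolynomial (Fin 3) ℂ where
  toFun := polyOf
  map_add' a b := by simp [polyOf, Finset.sum_add_distrib]
  map_smul' r a := by simp [polyOf, Finset.smul_sum, smul_monomial]

/-- The map `A ↦ ∑ Aᵢ fᵢ` from triples of cubics to sextics, in coordinates. -/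
noncomputable def sexticMap (f : Fin 3 → MvPolynomial (Fin 3) ℂ) :
    (Fin 3 → Expo 3 → ℂ) →ₗ[ℂ] (Expo 6 → ℂ) :=
  coeffVec 6 ∘ₗ ∑ i, LinearMap.mulLeft ℂ (f i) ∘ₗ polyOfLin 3 ∘ₗ LinearMap.proj i

theorem sexticMap_apply (f : Fin 3 → MvPolynomial (Fin 3) ℂ) (A : Fin 3 → Expo 3 → ℂ) :
    sexticMap f A = coeffVec 6 (f 0 * polyOf (A 0) + f 1 * polyOf (A 1) + f 2 * polyOf (A 2)) := by
  simp only [sexticMap, Fin.sum_univ_three, LinearMap.comp_apply, LinearMap.add_apply]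
  rfl

/-- The Koszul syzygies `f × v` with constant `v`, in coordinates. -/
noncomputable def koszulMap (f : Fin 3 → MvPolynomial (Fin 3) ℂ) :
    (Fin 3 → ℂ) →ₗ[ℂ] (Fin 3 → Expo 3 → ℂ) where
  toFun v := ![coeffVec 3 (v 2 • f 1 - v 1 • f 2), coeffVec 3 (v 0 • f 2 - v 2 • f 0),
    coeffVec 3 (v 1 • f 0 - v 0 • f 1)]
  map_add' v w := by
    funext i
    fin_cases i <;> simp only [Fin.zero_eta, Fin.mk_one, Fin.reduceFinMk, Matrix.cons_val,
      Pi.add_apply, ← map_add] <;> congr 1 <;> module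
  map_smul' r v := by
    funext i
    fin_cases i <;> simp only [Fin.zero_eta, Fin.mk_one, Fin.reduceFinMk, Matrix.cons_val,
      Pi.smul_apply, RingHom.id_apply, ← map_smul] <;> congr 1 <;> module

theorem ker_sexticMap_le {f : Fin 3 → MvPolynomial (Fin 3) ℂ} {N : ℕ}
    (hhom : ∀ i, (f i).IsHomogeneous 3) (hf : PowIn f N) :
    LinearMap.ker (sexticMap f) ≤ LinearMap.range (koszulMap f) := by
  intro A hA
  rw [LinearMap.mem_ker, sexticMap_apply] at hA
  have hP : ∀ i, (polyOf (A i)).IsHomogeneous 3 := fun i => polyOf_hom _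
  have h0 : f 0 * polyOf (A 0) + f 1 * polyOf (A 1) + f 2 * polyOf (A 2) = 0 :=
    hom_ext (d := 6) ((((hhom 0).mul (hP 0)).add ((hhom 1).mul (hP 1))).add ((hhom 2).mul (hP 2)))
      (isHomogeneous_zero _ _ _) fun m => congrFun hA m
  obtain ⟨v0, v1, v2, e0, e1, e2⟩ := hf.syz h0
  have hc : ∀ i v, homogeneousComponent 3 (f i * v) = coeff 0 v • f i := by
    intro i v
    have := homogeneousComponent_mul_hom (hhom i) 0 v
    rw [homogeneousComponent_zero, zero_add] at this
    rw [mul_comm, this, C_mul']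
  have hco : ∀ i, A i = coeffVec 3 (polyOf (A i)) := fun i => by
    funext m
    rw [coeffVec_apply, coeff_polyOf]
  have key : ∀ i p, polyOf (A i) = p → A i = coeffVec 3 (homogeneousComponent 3 p) := by
    intro i p hp
    rw [← hp, homogeneousComponent_of_mem (hP i), if_pos rfl, ← hco]
  refine ⟨![coeff 0 v0, coeff 0 v1, coeff 0 v2], ?_⟩
  have k0 := key 0 _ e0
  have k1 := key 1 _ e1
  have k2 := key 2 _ e2
  simp only [map_sub (homogeneousComponent 3), hc] at k0 k1 k2
  funext i
  fin_cases i
  · exact k0.symm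
  · exact k1.symm
  · exact k2.symm

/-- The quotient has dimension at most one in degree six: its sextics are detected by a
single linear functional. -/
theorem exists_functional {f : Fin 3 → MvPolynomial (Fin 3) ℂ} {N : ℕ}
    (hhom : ∀ i, (f i).IsHomogeneous 3) (hf : PowIn f N) :
    ∃ φ : MvPolynomial (Fin 3) ℂ →ₗ[ℂ] ℂ, ∀ p : MvPolynomial (Fin 3) ℂ, p.IsHomogeneous 6 →
      (φ p = 0 ↔ p ∈ Ideal.span (Set.range f)) := by
  have hker : finrank ℂ (LinearMap.ker (sexticMap f)) ≤ 3 :=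
    (Submodule.finrank_mono (ker_sexticMap_le hhom hf)).trans
      ((LinearMap.finrank_range_le _).trans (by simp))
  have hrn := LinearMap.finrank_range_add_finrank_ker (sexticMap f)
  have hq := Submodule.finrank_quotient_add_finrank (LinearMap.range (sexticMap f))
  have h3 : finrank ℂ (Fin 3 → Expo 3 → ℂ) = 30 := by
    rw [Module.finrank_pi_fintype]
    simp only [Module.finrank_fintype_fun_eq_card, card_expo]
    decide
  have h6 : finrank ℂ (Expo 6 → ℂ) = 28 := by
    rw [Module.finrank_fintype_fun_eq_card, card_expo]
    decide
  have hle : finrank ℂ ((Expo 6 → ℂ) ⧸ LinearMap.range (sexticMap f)) ≤ finrank ℂ ℂ := by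
    rw [Module.finrank_self]
    omega
  obtain ⟨ψ, hψ⟩ := finrank_le_iff_exists_linearMap.1 hle
  refine ⟨ψ ∘ₗ (Submodule.mkQ _) ∘ₗ coeffVec 6, fun p hp => ?_⟩
  simp only [LinearMap.comp_apply]
  rw [map_eq_zero_iff ψ hψ, Submodule.mkQ_apply, Submodule.Quotient.mk_eq_zero]
  constructor
  · rintro ⟨A, hA⟩
    rw [sexticMap_apply] at hA
    have hP : ∀ i, (polyOf (A i)).IsHomogeneous 3 := fun i => polyOf_hom _
    have : f 0 * polyOf (A 0) + f 1 * polyOf (A 1) + f 2 * polyOf (A 2) = p :=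
      hom_ext (d := 6)
        ((((hhom 0).mul (hP 0)).add ((hhom 1).mul (hP 1))).add ((hhom 2).mul (hP 2)))
        hp fun m => congrFun hA m
    rw [← this]
    have := comb_mem_span f fun i => polyOf (A i)
    simpa only [mul_comm] using this
  · intro hpJ
    obtain ⟨A, hA, e⟩ := mem_span_hom hhom (n := 3) hp hpJ
    refine ⟨fun i => coeffVec 3 (A i), ?_⟩
    rw [sexticMap_apply, e]
    have : ∀ i, polyOf (coeffVec 3 (A i)) = A i := fun i => polyOf_coeff (hA i)
    simp only [this]
    congr 1
    ring

/-! ### Derivatives and divisibility in two variables -/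

theorem totalDegree_pderiv_lt {σ : Type*} {i : σ} {p : MvPolynomial σ ℂ} (h : pderiv i p ≠ 0) :
    (pderiv i p).totalDegree < p.totalDegree := by
  classical
  have key : ∀ m ∈ (pderiv i p).support, m.degree + 1 ≤ p.totalDegree := by
    intro m hm
    rw [MvPolynomial.mem_support_iff, coeff_pderiv] at hm
    have := le_totalDegree (MvPolynomial.mem_support_iff.2 (left_ne_zero_of_mul hm))
    change (m + Finsupp.single i 1).degree ≤ _ at this
    simpa [Finsupp.degree_single] using this
  obtain ⟨m, hm⟩ := support_nonempty.2 h
  refine (Finset.sup_lt_iff ?_).2 fun m hm => key m hm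
  exact lt_of_lt_of_le (Nat.succ_pos _) (key m hm)

theorem pderiv_eq_zero_of_dvd {σ : Type*} {i : σ} {p : MvPolynomial σ ℂ} (h : p ∣ pderiv i p) :
    pderiv i p = 0 := by
  by_contra h0
  obtain ⟨q, hq⟩ := h
  have hlt := totalDegree_pderiv_lt h0
  have hp : p ≠ 0 := fun e => h0 (by rw [e, map_zero])
  have hq0 : q ≠ 0 := fun e => h0 (by rw [hq, e, mul_zero])
  rw [hq, totalDegree_mul_of_isDomain hp hq0] at hlt
  omega

theorem eq_C_of_pderiv_eq_zero {σ : Type*} {p : MvPolynomial σ ℂ} (h : ∀ i, pderiv i p = 0) :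
    ∃ c, p = C c := by
  classical
  refine ⟨coeff 0 p, ?_⟩
  ext m
  rw [coeff_C]
  split_ifs with hm
  · rw [hm]
  · obtain ⟨i, hi⟩ : ∃ i, m i ≠ 0 := by
      by_contra! hall
      exact hm (Finsupp.ext fun i => (hall i).symm)
    have hc := congrArg (coeff (m - Finsupp.single i 1)) (h i)
    rw [coeff_pderiv, coeff_zero, tsub_add_cancel_of_le (by simpa [Nat.one_le_iff_ne_zero] using hi)]
      at hc
    exact (mul_eq_zero.1 hc).resolve_right (Nat.cast_add_one_ne_zero _)

/-- Polynomials with equal logarithmic derivatives are proportional. -/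
theorem eq_C_mul_of_pderiv {u v : ParamRing} (hv : v ≠ 0)
    (h : ∀ i, pderiv i u * v = u * pderiv i v) : ∃ c, u = C c * v := by
  obtain ⟨v', u', c, hrel, rfl, rfl⟩ := UniqueFactorizationMonoid.exists_reduced_factors v hv u
  have hc : c ≠ 0 := left_ne_zero_of_mul hv
  have hv' : v' ≠ 0 := right_ne_zero_of_mul hv
  have h' : ∀ i, pderiv i u' * v' = u' * pderiv i v' := by
    intro i
    have := h i
    rw [pderiv_mul, pderiv_mul] at this
    refine mul_left_cancel₀ (mul_ne_zero hc hc) ?_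
    linear_combination this
  have hu0 : ∀ i, pderiv i u' = 0 := fun i => pderiv_eq_zero_of_dvd
    (hrel.symm.dvd_of_dvd_mul_right (Dvd.intro _ (h' i).symm))
  have hv0 : ∀ i, pderiv i v' = 0 := fun i => pderiv_eq_zero_of_dvd
    (hrel.dvd_of_dvd_mul_left (Dvd.intro_left _ (h' i)))
  obtain ⟨a, rfl⟩ := eq_C_of_pderiv_eq_zero hu0
  obtain ⟨b, rfl⟩ := eq_C_of_pderiv_eq_zero hv0
  have hb : b ≠ 0 := fun e => hv' (by rw [e, C_0])
  refine ⟨a / b, ?_⟩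
  have : (C (a / b) : ParamRing) * C b = C a := by rw [← C_mul, div_mul_cancel₀ _ hb]
  linear_combination -c * this

theorem pderiv_comm_two (p : ParamRing) : pderiv 1 (pderiv 0 p) = pderiv 0 (pderiv 1 p) := by
  have h1 : ⁅pderiv (R := ℂ) (0 : Fin 2), pderiv (R := ℂ) (1 : Fin 2)⁆ = 0 := by
    apply MvPolynomial.derivation_ext
    intro i
    rw [Derivation.commutator_apply]
    fin_cases i <;> simp [pderiv_X]
  have := congrArg (fun D => D p) h1
  rw [Derivation.commutator_apply] at this
  exact (sub_eq_zero.1 this).symm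

theorem eq_affine_of_pderiv {p : ParamRing} {a b : ℂ} (h0 : pderiv 0 p = C a)
    (h1 : pderiv 1 p = C b) : ∃ c, p = C a * X 0 + C b * X 1 + C c := by
  obtain ⟨c, hc⟩ := eq_C_of_pderiv_eq_zero (p := p - C a * X 0 - C b * X 1) (by
    intro i
    fin_cases i <;> simp [h0, h1, pderiv_X])
  exact ⟨c, by linear_combination hc⟩

/-! ### Binary polynomials with vanishing Hessian -/

/-- `(δ, p, q)` lies in the kernel of the Hessian matrix of the homogenization of `F`, a
polynomial of degree at most six: along the vector field `D = p ∂₀ + q ∂₁` one has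
`D F = 6 δ F` and `D ∂ᵢF = 5 δ ∂ᵢF`. -/
structure HessKer (F δ p q : ParamRing) : Prop where
  zero : p * pderiv 0 F + q * pderiv 1 F = 6 * δ * F
  one : p * pderiv 0 (pderiv 0 F) + q * pderiv 0 (pderiv 1 F) = 5 * δ * pderiv 0 F
  two : p * pderiv 0 (pderiv 1 F) + q * pderiv 1 (pderiv 1 F) = 5 * δ * pderiv 1 F

/-- The derivative of a kernel vector field along itself is, up to a multiple of the field, a
kernel vector field. -/
theorem HessKer.derive {F δ p q : ParamRing} (h : HessKer F δ p q) :
    HessKer F (p * pderiv 0 δ + q * pderiv 1 δ)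
      (p * pderiv 0 p + q * pderiv 1 p - δ * p) (p * pderiv 0 q + q * pderiv 1 q - δ * q) := by
  obtain ⟨h0, h1, h2⟩ := h
  have c6 : ∀ i : Fin 2, pderiv i (6 : ParamRing) = 0 := fun i => pderiv_C (a := (6 : ℂ))
  have c5 : ∀ i : Fin 2, pderiv i (5 : ParamRing) = 0 := fun i => pderiv_C (a := (5 : ℂ))
  have h0a := congrArg (pderiv 0) h0
  have h0b := congrArg (pderiv 1) h0
  have h1a := congrArg (pderiv 0) h1
  have h1b := congrArg (pderiv 1) h1
  have h2a := congrArg (pderiv 0) h2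
  have h2b := congrArg (pderiv 1) h2
  simp only [map_add, pderiv_mul, c5, c6, pderiv_comm_two] at h0a h0b h1a h1b h2a h2b
  refine ⟨?_, ?_, ?_⟩
  · linear_combination p * h0a + q * h0b - p * h1 - q * h2
  · linear_combination q * h1b - q * h2a + pderiv 0 p * h1 + pderiv 0 q * h2 + 5 * δ * h0a
      - 6 * δ * h1 - 5 * pderiv 0 δ * h0
  · linear_combination p * h2a - p * h1b + pderiv 1 p * h1 + pderiv 1 q * h2 + 5 * δ * h0b
      - 6 * δ * h2 - 5 * pderiv 1 δ * h0

/-- A kernel vector field may be chosen with straight integral curves. -/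
theorem HessKer.exists_straight {F δ p q : ParamRing} (h : HessKer F δ p q)
    (hpq : p ≠ 0 ∨ q ≠ 0) :
    ∃ δ' p' q', HessKer F δ' p' q' ∧ (p' ≠ 0 ∨ q' ≠ 0) ∧
      p' * (p' * pderiv 0 q' + q' * pderiv 1 q') = q' * (p' * pderiv 0 p' + q' * pderiv 1 p') := by
  by_cases hs : p * (p * pderiv 0 q + q * pderiv 1 q) = q * (p * pderiv 0 p + q * pderiv 1 p)
  · exact ⟨δ, p, q, h, hpq, hs⟩
  -- Two independent kernel vector fields combine to one parallel to the first axis.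
  have h' := h.derive
  set δ₁ := p * pderiv 0 δ + q * pderiv 1 δ
  set p₁ := p * pderiv 0 p + q * pderiv 1 p - δ * p with hp₁
  set q₁ := p * pderiv 0 q + q * pderiv 1 q - δ * q with hq₁
  refine ⟨q₁ * δ - q * δ₁, q₁ * p - q * p₁, 0, ⟨?_, ?_, ?_⟩, Or.inl fun h0 => hs ?_, by simp⟩
  · linear_combination q₁ * h.zero - q * h'.zero
  · linear_combination q₁ * h.one - q * h'.one
  · linear_combination q₁ * h.two - q * h'.two
  · rw [hp₁, hq₁] at h0
    linear_combination h0

/-- A straight vector field is, after removing common factors, of the form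
`(k a + p₀, k b + q₀)`: its integral curves are the lines through one point or parallel lines. -/
theorem straight_eq_affine {p q : ParamRing} (hrel : IsRelPrime p q)
    (hs : p * (p * pderiv 0 q + q * pderiv 1 q) = q * (p * pderiv 0 p + q * pderiv 1 p)) :
    ∃ k p₀ q₀ : ℂ, p = C k * X 0 + C p₀ ∧ q = C k * X 1 + C q₀ := by
  have hpb : pderiv 1 p = 0 := by
    refine pderiv_eq_zero_of_dvd ?_
    refine hrel.dvd_of_dvd_mul_left (hrel.dvd_of_dvd_mul_left
      ⟨p * pderiv 0 q + q * pderiv 1 q - q * pderiv 0 p, ?_⟩)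
    linear_combination -hs
  have hqa : pderiv 0 q = 0 := by
    refine pderiv_eq_zero_of_dvd ?_
    refine hrel.symm.dvd_of_dvd_mul_left (hrel.symm.dvd_of_dvd_mul_left
      ⟨p * pderiv 0 p + q * pderiv 1 p - p * pderiv 1 q, ?_⟩)
    linear_combination hs
  have unit_const : ∀ u : ParamRing, IsUnit u → ∃ c, u = C c := by
    intro u hu
    refine eq_C_of_pderiv_eq_zero fun i => pderiv_eq_zero_of_dvd hu.dvd
  by_cases hp : p = 0
  · obtain ⟨c, hc⟩ := unit_const q (hrel (hp ▸ dvd_zero q) dvd_rfl)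
    exact ⟨0, 0, c, by simp [hp], by simp [hc]⟩
  by_cases hq : q = 0
  · obtain ⟨c, hc⟩ := unit_const p (hrel dvd_rfl (hq ▸ dvd_zero p))
    exact ⟨0, c, 0, by simp [hc], by simp [hq]⟩
  have hk : pderiv 1 q = pderiv 0 p := by
    refine mul_left_cancel₀ (mul_ne_zero hp hq) ?_
    rw [hqa, hpb] at hs
    linear_combination hs
  obtain ⟨k, hk'⟩ := eq_C_of_pderiv_eq_zero (p := pderiv 0 p) (by
    intro i
    fin_cases i
    · change pderiv 0 (pderiv 0 p) = 0
      rw [← hk, ← pderiv_comm_two, hqa, map_zero]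
    · change pderiv 1 (pderiv 0 p) = 0
      rw [pderiv_comm_two, hpb, map_zero])
  obtain ⟨p₀, hp₀⟩ := eq_affine_of_pderiv hk' (b := 0) (by rw [hpb, C_0])
  obtain ⟨q₀, hq₀⟩ := eq_affine_of_pderiv (p := q) (a := 0) (b := k) (by rw [hqa, C_0])
    (by rw [hk, hk'])
  exact ⟨k, p₀, q₀, by rw [hp₀]; simp, by rw [hq₀]; simp⟩

/-- A polynomial `F` of degree at most six whose homogenization has vanishing Hessian is a cone:
some nonzero constant combination of the three partial derivatives of the homogenization
vanishes. -/
theorem cone_of_hessKer {F δ p q : ParamRing} (hdeg : F.totalDegree ≤ 6) (h : HessKer F δ p q)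
    (hne : δ ≠ 0 ∨ p ≠ 0 ∨ q ≠ 0) :
    ∃ c₀ c₁ c₂ : ℂ, (c₀ ≠ 0 ∨ c₁ ≠ 0 ∨ c₂ ≠ 0) ∧
      C c₀ * pderiv 0 F + C c₁ * pderiv 1 F
        + C c₂ * (6 * F - X 0 * pderiv 0 F - X 1 * pderiv 1 F) = 0 := by
  have h60 : (6 : ParamRing) ≠ 0 := by norm_num
  by_cases hF : F = 0
  · exact ⟨1, 0, 0, by simp, by simp [hF]⟩
  have hpq : p ≠ 0 ∨ q ≠ 0 := by
    rcases hne with hδ | hpq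
    · by_contra! hpq
      have h0 := h.zero
      rw [hpq.1, hpq.2] at h0
      exact mul_ne_zero (mul_ne_zero h60 hδ) hF (by linear_combination -h0)
    · exact hpq
  obtain ⟨δ, P, Q, h, hPQ, hs⟩ := h.exists_straight hpq
  obtain ⟨p, q, c, hrel, hcp, hcq⟩ : ∃ p q c, IsRelPrime p q ∧ c * p = P ∧ c * q = Q := by
    rcases hPQ with hP | hQ
    · exact UniqueFactorizationMonoid.exists_reduced_factors P hP Q
    · exact UniqueFactorizationMonoid.exists_reduced_factors' P Q hQ
  have hc : c ≠ 0 := by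
    rintro rfl
    rcases hPQ with hP | hQ
    · exact hP (by rw [← hcp, zero_mul])
    · exact hQ (by rw [← hcq, zero_mul])
  subst hcp hcq
  obtain ⟨k, p₀, q₀, rfl, rfl⟩ := straight_eq_affine hrel (by
    simp only [pderiv_mul] at hs
    refine mul_left_cancel₀ (mul_ne_zero hc (mul_ne_zero hc hc)) ?_
    linear_combination hs)
  obtain ⟨G, hG⟩ : ∃ G, G = (C k * X 0 + C p₀) * pderiv 0 F + (C k * X 1 + C q₀) * pderiv 1 F
    - C k * 6 * F := ⟨_, rfl⟩
  have c6 : ∀ i : Fin 2, pderiv i (6 : ParamRing) = 0 := fun i => pderiv_C (a := (6 : ℂ))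
  have x01 : pderiv 0 (X 1 : ParamRing) = 0 := pderiv_X_of_ne (by decide)
  have x10 : pderiv 1 (X 0 : ParamRing) = 0 := pderiv_X_of_ne (by decide)
  have hG0 : c * G = 6 * (δ - c * C k) * F := by
    rw [hG]; linear_combination h.zero
  have hGa : c * pderiv 0 G = 5 * (δ - c * C k) * pderiv 0 F := by
    rw [hG]
    simp only [map_add, map_sub, pderiv_mul, pderiv_C, pderiv_X_self, c6, x01]
    linear_combination h.one
  have hGb : c * pderiv 1 G = 5 * (δ - c * C k) * pderiv 1 F := by
    rw [hG]
    simp only [map_add, map_sub, pderiv_mul, pderiv_C, pderiv_X_self, c6, x10, pderiv_comm_two]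
    linear_combination h.two
  have hlog : ∀ i, 6 * F * pderiv i G = 5 * G * pderiv i F := by
    intro i
    refine mul_left_cancel₀ hc ?_
    fin_cases i
    · change c * (6 * F * pderiv 0 G) = c * (5 * G * pderiv 0 F)
      linear_combination 6 * F * hGa - 5 * pderiv 0 F * hG0
    · change c * (6 * F * pderiv 1 G) = c * (5 * G * pderiv 1 F)
      linear_combination 6 * F * hGb - 5 * pderiv 1 F * hG0
  obtain ⟨κ, hκ⟩ := eq_C_mul_of_pderiv (u := G ^ 6) (v := F ^ 5) (pow_ne_zero _ hF) (by
    intro i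
    rw [pderiv_pow, pderiv_pow]
    push_cast
    linear_combination G ^ 5 * F ^ 4 * hlog i)
  by_cases hκ0 : κ = 0
  · have hG' : G = 0 := by
      rw [hκ0, C_0, zero_mul] at hκ
      exact pow_eq_zero_iff (by norm_num) |>.1 hκ
    refine ⟨p₀, q₀, -k, ?_, ?_⟩
    · by_contra! h0
      obtain ⟨h1, h2, h3⟩ := h0
      have : k = 0 := neg_eq_zero.1 h3
      simp [h1, h2, this] at hPQ
    · rw [hG'] at hG
      rw [C_neg]
      linear_combination -hG
  have hκC : (C κ⁻¹ : ParamRing) * C κ = 1 := by rw [← C_mul, inv_mul_cancel₀ hκ0, C_1]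
  obtain ⟨g, hg⟩ : G ∣ F := by
    refine (IsIntegrallyClosed.pow_dvd_pow_iff (n := 6) (by norm_num)).1 ⟨C κ⁻¹ * F, ?_⟩
    linear_combination -C κ⁻¹ * F * hκ - F ^ 6 * hκC
  have hGne : G ≠ 0 := fun e => hF (by rw [hg, e, zero_mul])
  have hGg : G = C κ * g ^ 5 := by
    refine mul_left_cancel₀ (pow_ne_zero 5 hGne) ?_
    rw [hg] at hκ
    linear_combination hκ
  have hFg : F = C κ * g ^ 6 := by rw [hg, hGg]; ring
  have hgne : g ≠ 0 := fun e => hF (by rw [hg, e, mul_zero])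
  have hgdeg : g.totalDegree ≤ 1 := by
    have h1 : F.totalDegree = 6 * g.totalDegree := by
      have hpow : ∀ n, (g ^ n).totalDegree = n * g.totalDegree := by
        intro n
        induction n with
        | zero => simp
        | succ n ih =>
          rw [pow_succ, totalDegree_mul_of_isDomain (pow_ne_zero _ hgne) hgne, ih]
          ring
      rw [hFg, totalDegree_mul_of_isDomain (by simpa using hκ0) (pow_ne_zero _ hgne),
        totalDegree_C, hpow, zero_add]
    omega
  have hconst : ∀ i, ∃ a, pderiv i g = C a := by
    intro i
    by_cases h0 : pderiv i g = 0
    · exact ⟨0, by rw [h0, C_0]⟩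
    · have := totalDegree_pderiv_lt h0
      exact ⟨_, totalDegree_eq_zero_iff_eq_C.1 (by omega)⟩
  obtain ⟨a, ha⟩ := hconst 0
  obtain ⟨b, hb⟩ := hconst 1
  by_cases hab : a = 0
  · exact ⟨1, 0, 0, by simp, by simp [hFg, ha, hab]⟩
  · refine ⟨b, -a, 0, by simp [hab], ?_⟩
    rw [hFg]
    simp only [pderiv_C_mul, pderiv_pow, ha, hb, C_neg, C_0]
    ring

/-! ### The first and zeroth Lefschetz maps -/

section LineMoment

variable (φ : MvPolynomial (Fin 3) ℂ →ₗ[ℂ] ℂ)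

/-- The polynomial function `(a, b) ↦ φ (Lⁿ p)` on the parameter plane, where `L = z - a x - b y`. -/
noncomputable def lineMoment : ℕ → MvPolynomial (Fin 3) ℂ → ParamRing
  | 0, p => C (φ p)
  | n + 1, p => lineMoment n (X 2 * p) - X 0 * lineMoment n (X 0 * p) - X 1 * lineMoment n (X 1 * p)

theorem lineMoment_succ (n : ℕ) (p : MvPolynomial (Fin 3) ℂ) :
    lineMoment φ (n + 1) p = lineMoment φ n (X 2 * p) - X 0 * lineMoment φ n (X 0 * p)
      - X 1 * lineMoment φ n (X 1 * p) := rfl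

theorem eval_lineMoment (pt : Fin 2 → ℂ) (n : ℕ) (p : MvPolynomial (Fin 3) ℂ) :
    eval pt (lineMoment φ n p) = φ (line (pt 0) (pt 1) ^ n * p) := by
  induction n generalizing p with
  | zero => simp [lineMoment]
  | succ n ih =>
    simp only [lineMoment_succ, map_sub, map_mul, eval_X, ih]
    rw [← smul_eq_mul (pt 0), ← smul_eq_mul (pt 1), ← map_smul, ← map_smul, ← map_sub, ← map_sub]
    congr 1
    simp only [smul_eq_C_mul, pow_succ, line]
    ring

theorem lineMoment_add (n : ℕ) (p q : MvPolynomial (Fin 3) ℂ) :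
    lineMoment φ n (p + q) = lineMoment φ n p + lineMoment φ n q := by
  refine MvPolynomial.funext fun pt => ?_
  simp only [map_add, eval_lineMoment, mul_add]

theorem lineMoment_C_mul (n : ℕ) (c : ℂ) (p : MvPolynomial (Fin 3) ℂ) :
    lineMoment φ n (C c * p) = C c * lineMoment φ n p := by
  refine MvPolynomial.funext fun pt => ?_
  rw [map_mul, eval_C, eval_lineMoment, eval_lineMoment, mul_left_comm, ← smul_eq_C_mul, map_smul,
    smul_eq_mul]

theorem pderiv_lineMoment (n : ℕ) (p : MvPolynomial (Fin 3) ℂ) :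
    pderiv 0 (lineMoment φ (n + 1) p) = -(n + 1) * lineMoment φ n (X 0 * p) ∧
    pderiv 1 (lineMoment φ (n + 1) p) = -(n + 1) * lineMoment φ n (X 1 * p) := by
  have x01 : pderiv 0 (X 1 : ParamRing) = 0 := pderiv_X_of_ne (by decide)
  have x10 : pderiv 1 (X 0 : ParamRing) = 0 := pderiv_X_of_ne (by decide)
  induction n generalizing p with
  | zero => constructor <;> rw [lineMoment_succ] <;> simp [lineMoment, x01, x10]
  | succ n ih =>
    constructor
    · rw [lineMoment_succ φ (n + 1)]
      simp only [map_sub, pderiv_mul, pderiv_X_self, x01, (ih _).1]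
      rw [lineMoment_succ φ n (X 0 * p), mul_left_comm (X 0 : MvPolynomial (Fin 3) ℂ) (X 2),
        mul_left_comm (X 0 : MvPolynomial (Fin 3) ℂ) (X 1)]
      push_cast
      ring
    · rw [lineMoment_succ φ (n + 1)]
      simp only [map_sub, pderiv_mul, pderiv_X_self, x10, (ih _).2]
      rw [lineMoment_succ φ n (X 1 * p), mul_left_comm (X 1 : MvPolynomial (Fin 3) ℂ) (X 2),
        mul_left_comm (X 1 : MvPolynomial (Fin 3) ℂ) (X 0)]
      push_cast
      ring

theorem totalDegree_lineMoment_le (n : ℕ) (p : MvPolynomial (Fin 3) ℂ) :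
    (lineMoment φ n p).totalDegree ≤ n := by
  induction n generalizing p with
  | zero => simp [lineMoment]
  | succ n ih =>
    rw [lineMoment_succ]
    have hX : ∀ i q, (X i * lineMoment φ n q : ParamRing).totalDegree ≤ n + 1 := fun i q =>
      (totalDegree_mul _ _).trans (by rw [totalDegree_X, add_comm]; exact Nat.succ_le_succ (ih q))
    exact (totalDegree_sub _ _).trans (max_le ((totalDegree_sub _ _).trans
      (max_le ((ih _).trans (Nat.le_succ n)) (hX _ _))) (hX _ _))

theorem lineMoment_descend {n : ℕ} {p : MvPolynomial (Fin 3) ℂ} (h : lineMoment φ (n + 1) p = 0)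
    (i : Fin 3) : lineMoment φ n (X i * p) = 0 := by
  obtain ⟨h0, h1⟩ := pderiv_lineMoment φ n p
  have hn : -((n : ParamRing) + 1) ≠ 0 := neg_ne_zero.2 (Nat.cast_add_one_ne_zero n)
  rw [h, map_zero] at h0 h1
  have e0 := (mul_eq_zero.1 h0.symm).resolve_left hn
  have e1 := (mul_eq_zero.1 h1.symm).resolve_left hn
  rw [lineMoment_succ, e0, e1, mul_zero, mul_zero, sub_zero, sub_zero] at h
  fin_cases i
  exacts [e0, e1, h]

/-- The powers `Lⁿ` span the forms of degree `n`. -/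
theorem functional_eq_zero_of_lineMoment {n : ℕ} {p : MvPolynomial (Fin 3) ℂ}
    (h : lineMoment φ n p = 0) {q : MvPolynomial (Fin 3) ℂ} (hq : q.IsHomogeneous n) :
    φ (q * p) = 0 := by
  induction n generalizing p q with
  | zero =>
    have hq' := totalDegree_eq_zero_iff_eq_C.1 (Nat.le_zero.1 hq.totalDegree_le)
    have hp : φ p = 0 := by simpa [lineMoment] using h
    rw [hq', ← smul_eq_C_mul, map_smul, hp, smul_zero]
  | succ n ih =>
    have e := hq.sum_X_mul_pderiv
    have hs : φ ((n + 1) • (q * p)) = 0 := by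
      rw [← smul_mul_assoc, ← e, Finset.sum_mul, map_sum]
      refine Finset.sum_eq_zero fun i _ => ?_
      rw [mul_comm (X i), mul_assoc]
      exact ih (lineMoment_descend φ h i) hq.pderiv
    rw [map_nsmul, nsmul_eq_mul] at hs
    exact (mul_eq_zero.1 hs).resolve_left (Nat.cast_ne_zero.2 n.succ_ne_zero)

/-- The Gram matrix of the pairing `(ℓ, ℓ') ↦ φ (L⁴ ℓ ℓ')` on linear forms. -/
noncomputable def gramMatrix : Matrix (Fin 3) (Fin 3) ParamRing :=
  fun i j => lineMoment φ 4 (X i * X j)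

/-- If the Gram matrix is singular for every line, then a fixed nonzero linear form is
orthogonal to all the powers `L⁵`. -/
theorem exists_linear_of_gram {φ : MvPolynomial (Fin 3) ℂ →ₗ[ℂ] ℂ} (h : (gramMatrix φ).det = 0) :
    ∃ c : MvPolynomial (Fin 3) ℂ, c ≠ 0 ∧ c.IsHomogeneous 1 ∧ lineMoment φ 5 c = 0 := by
  obtain ⟨w, hw0, hw⟩ := Matrix.exists_mulVec_eq_zero_iff.2 h
  have hrow : ∀ i, lineMoment φ 4 (X i * X 0) * w 0 + lineMoment φ 4 (X i * X 1) * w 1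
      + lineMoment φ 4 (X i * X 2) * w 2 = 0 := fun i => by
    have := congrFun hw i
    rwa [Matrix.mulVec, dotProduct, Fin.sum_univ_three] at this
  obtain ⟨F, hF⟩ : ∃ F, F = lineMoment φ 6 1 := ⟨_, rfl⟩
  have a0 : pderiv 0 F = -6 * lineMoment φ 5 (X 0) := by
    rw [hF, (pderiv_lineMoment φ 5 1).1, mul_one]; push_cast; ring
  have a1 : pderiv 1 F = -6 * lineMoment φ 5 (X 1) := by
    rw [hF, (pderiv_lineMoment φ 5 1).2, mul_one]; push_cast; ring
  have c6 : ∀ i : Fin 2, pderiv i (-6 : ParamRing) = 0 := fun i => by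
    rw [map_neg, show (6 : ParamRing) = C 6 from rfl, pderiv_C, neg_zero]
  have a00 : pderiv 0 (pderiv 0 F) = 30 * lineMoment φ 4 (X 0 * X 0) := by
    rw [a0, pderiv_mul, c6, (pderiv_lineMoment φ 4 _).1]; push_cast; ring
  have a01 : pderiv 0 (pderiv 1 F) = 30 * lineMoment φ 4 (X 0 * X 1) := by
    rw [a1, pderiv_mul, c6, (pderiv_lineMoment φ 4 _).1]; push_cast; ring
  have a11 : pderiv 1 (pderiv 1 F) = 30 * lineMoment φ 4 (X 1 * X 1) := by
    rw [a1, pderiv_mul, c6, (pderiv_lineMoment φ 4 _).2]; push_cast; ring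
  have f6 := lineMoment_succ φ 5 1
  rw [← hF] at f6
  simp only [mul_one] at f6
  have f5 : ∀ i, lineMoment φ 5 (X i) = lineMoment φ 4 (X i * X 2) - X 0 * lineMoment φ 4 (X i * X 0)
      - X 1 * lineMoment φ 4 (X i * X 1) := fun i => by
    rw [lineMoment_succ φ 4, mul_comm (X 2) (X i), mul_comm (X 0) (X i), mul_comm (X 1) (X i)]
  have s10 : lineMoment φ 4 (X 1 * X 0) = lineMoment φ 4 (X 0 * X 1) := by rw [mul_comm]
  have s20 : lineMoment φ 4 (X 2 * X 0) = lineMoment φ 4 (X 0 * X 2) := by rw [mul_comm]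
  have s21 : lineMoment φ 4 (X 2 * X 1) = lineMoment φ 4 (X 1 * X 2) := by rw [mul_comm]
  have r0 := hrow 0
  have r1 := hrow 1
  have r2 := hrow 2
  have f50 := f5 0
  have f51 := f5 1
  have f52 := f5 2
  rw [s10] at r1 f51
  rw [s20, s21] at r2 f52
  -- In the basis `L, x, y` of linear forms the kernel vector becomes `(w₂, w₀ + a w₂, w₁ + b w₂)`.
  have hker : HessKer F (w 2) (w 0 + X 0 * w 2) (w 1 + X 1 * w 2) := by
    refine ⟨?_, ?_, ?_⟩
    · rw [a0, a1, f6, f50, f51, f52]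
      linear_combination -6 * r2 + 6 * X 0 * r0 + 6 * X 1 * r1
    · rw [a00, a01, a0, f50]
      linear_combination 30 * r0
    · rw [a01, a11, a1, f51]
      linear_combination 30 * r1
  obtain ⟨c₀, c₁, c₂, hc, hcF⟩ := cone_of_hessKer
    (by rw [hF]; exact totalDegree_lineMoment_le φ 6 1) hker (by
      by_contra! h0
      obtain ⟨e2, e0, e1⟩ := h0
      rw [e2, mul_zero, add_zero] at e0 e1
      exact hw0 (by funext i; fin_cases i <;> assumption))
  refine ⟨C (-c₀) * X 0 + C (-c₁) * X 1 + C c₂ * X 2, fun h0 => ?_, ?_, ?_⟩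
  · have e : ∀ i : Fin 3, eval (Pi.single i 1) (C (-c₀) * X 0 + C (-c₁) * X 1 + C c₂ * X 2) = 0 :=
      fun i => by rw [h0, map_zero]
    have e0 := e 0
    have e1 := e 1
    have e2 := e 2
    simp at e0 e1 e2
    simp [e0, e1, e2] at hc
  · exact (((isHomogeneous_X _ _).C_mul _).add ((isHomogeneous_X _ _).C_mul _)).add
      ((isHomogeneous_X _ _).C_mul _)
  · rw [lineMoment_add, lineMoment_add, lineMoment_C_mul, lineMoment_C_mul, lineMoment_C_mul]
    rw [a0, a1] at hcF
    refine mul_left_cancel₀ (show (6 : ParamRing) ≠ 0 by norm_num) ?_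
    simp only [C_neg]
    linear_combination hcF - 6 * C c₂ * f6

end LineMoment

/-- The family of quintic forms `m fᵢ` (with `m` a quadratic monomial) and `L⁴ X_j`, which spans
`J₅ + L⁴ R₁`. -/
noncomputable def quinticFamily (a b : ℂ) (f : Fin 3 → MvPolynomial (Fin 3) ℂ) :
    (Fin 3 × Expo 2) ⊕ Expo 1 → MvPolynomial (Fin 3) ℂ
  | .inl (i, m) => f i * monomial m.1 1
  | .inr m => line a b ^ 4 * monomial m.1 1

theorem quinticFamily_hom (a b : ℂ) {f : Fin 3 → MvPolynomial (Fin 3) ℂ}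
    (hf : ∀ i, (f i).IsHomogeneous 3) (s : (Fin 3 × Expo 2) ⊕ Expo 1) :
    (quinticFamily a b f s).IsHomogeneous 5 := by
  rcases s with ⟨i, m⟩ | m
  · exact (hf i).mul (isHomogeneous_monomial (1 : ℂ) (mem_expo.1 m.2))
  · exact ((line_hom a b).pow 4).mul (isHomogeneous_monomial (1 : ℂ) (mem_expo.1 m.2))

theorem quinticFamily_sum (a b : ℂ) (f : Fin 3 → MvPolynomial (Fin 3) ℂ)
    (c : (Fin 3 × Expo 2) ⊕ Expo 1 → ℂ) :
    ∑ s, C (c s) * quinticFamily a b f s =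
      (f 0 * polyOf (fun m => c (.inl (0, m))) + f 1 * polyOf (fun m => c (.inl (1, m)))
        + f 2 * polyOf (fun m => c (.inl (2, m)))) + line a b ^ 4 * polyOf (fun m => c (.inr m)) := by
  have h : ∀ (d : ℕ) (g : MvPolynomial (Fin 3) ℂ) (e : Expo d → ℂ),
      ∑ m, C (e m) * (g * monomial m.1 1) = g * polyOf e := by
    intro d g e
    rw [polyOf, Finset.mul_sum]
    refine Finset.sum_congr rfl fun m _ => ?_
    rw [mul_left_comm, C_mul_monomial, mul_one]
  rw [Fintype.sum_sum_type, Fintype.sum_prod_type]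
  simp only [Fin.sum_univ_three, quinticFamily, h]

/-- For the lines outside a proper closed subset, multiplication by `L⁴` is an isomorphism
`A₁ → A₅` and multiplication by `L⁶` is an isomorphism `A₀ → A₆`. -/
theorem lefschetz_four_point {f : Fin 3 → MvPolynomial (Fin 3) ℂ} {N : ℕ}
    (hom : ∀ i, (f i).IsHomogeneous 3) (hf : PowIn f N) :
    ∃ D : ParamRing, D ≠ 0 ∧ ∀ pt : Fin 2 → ℂ, eval pt D ≠ 0 →
      (∀ q : MvPolynomial (Fin 3) ℂ, q.IsHomogeneous 1 →
        line (pt 0) (pt 1) ^ 4 * q ∈ Ideal.span (Set.range f) → q = 0) ∧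
      (∀ p : MvPolynomial (Fin 3) ℂ, p.IsHomogeneous 5 → ∃ q : MvPolynomial (Fin 3) ℂ,
        q.IsHomogeneous 1 ∧ p - line (pt 0) (pt 1) ^ 4 * q ∈ Ideal.span (Set.range f)) ∧
      (∀ q : MvPolynomial (Fin 3) ℂ, q.IsHomogeneous 0 →
        line (pt 0) (pt 1) ^ 6 * q ∈ Ideal.span (Set.range f) → q = 0) ∧
      (∀ p : MvPolynomial (Fin 3) ℂ, p.IsHomogeneous 6 → ∃ q : MvPolynomial (Fin 3) ℂ,
        q.IsHomogeneous 0 ∧ p - line (pt 0) (pt 1) ^ 6 * q ∈ Ideal.span (Set.range f)) := by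
  obtain ⟨φ, hφ⟩ := exists_functional hom hf
  have hdet : (gramMatrix φ).det ≠ 0 := by
    intro h
    obtain ⟨c, hc0, hc, hc5⟩ := exists_linear_of_gram h
    exact hc0 (linear_eq_zero_of_socle hom hf hc fun p hp =>
      (hφ _ (hp.mul hc)).1 (functional_eq_zero_of_lineMoment φ hc5 hp))
  have hF : lineMoment φ 6 1 ≠ 0 := by
    intro h
    refine hdet ?_
    have : gramMatrix φ = 0 := by
      funext i j
      have := lineMoment_descend φ (lineMoment_descend φ h j) i
      rwa [mul_one] at this
    rw [this, Matrix.det_zero]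
  refine ⟨(gramMatrix φ).det * lineMoment φ 6 1, mul_ne_zero hdet hF, fun pt hpt => ?_⟩
  rw [map_mul] at hpt
  have hdet' := left_ne_zero_of_mul hpt
  have hF' := right_ne_zero_of_mul hpt
  rw [eval_lineMoment, mul_one] at hF'
  set L := line (pt 0) (pt 1) with hL
  have hLhom : L.IsHomogeneous 1 := line_hom _ _
  have hinj1 : ∀ q : MvPolynomial (Fin 3) ℂ, q.IsHomogeneous 1 →
      L ^ 4 * q ∈ Ideal.span (Set.range f) → q = 0 := by
    intro q hq hqJ
    have hq' := (mem_homogeneousSubmodule 1 q).2 hq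
    rw [homogeneousSubmodule_one_eq_span_X, Submodule.mem_span_range_iff_exists_fun] at hq'
    obtain ⟨c, hc⟩ := hq'
    have hc0 : c = 0 := by
      by_contra hc0
      rw [RingHom.map_det] at hdet'
      refine hdet' (Matrix.exists_mulVec_eq_zero_iff.1 ⟨c, hc0, ?_⟩)
      funext i
      have h0 : φ (L ^ 4 * (X i * q)) = 0 := by
        refine (hφ _ ((hLhom.pow 4).mul ((isHomogeneous_X _ _).mul hq))).2 ?_
        rw [mul_left_comm]
        exact Ideal.mul_mem_left _ _ hqJ
      rw [Pi.zero_apply, ← h0, ← hc, Finset.mul_sum, Finset.mul_sum, map_sum]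
      rw [Matrix.mulVec, dotProduct]
      refine Finset.sum_congr rfl fun j _ => ?_
      rw [mul_smul_comm, mul_smul_comm, map_smul, smul_eq_mul, mul_comm]
      congr 1
      exact eval_lineMoment φ pt 4 _
    rw [← hc, hc0]
    simp
  refine ⟨hinj1, fun p hp => ?_, fun q hq hqJ => ?_, fun p hp => ?_⟩
  · have hcard : Fintype.card ((Fin 3 × Expo 2) ⊕ Expo 1) = (5 + 2).choose 2 := by
      rw [Fintype.card_sum, Fintype.card_prod, card_expo, card_expo]
      rfl
    have hinj : ∀ c : (Fin 3 × Expo 2) ⊕ Expo 1 → ℂ,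
        ∑ s, C (c s) * quinticFamily (pt 0) (pt 1) f s = 0 → c = 0 := by
      intro c hc
      rw [quinticFamily_sum, ← hL] at hc
      have h1 : polyOf (fun m => c (.inr m)) = 0 := by
        refine hinj1 _ (polyOf_hom _) ?_
        have e := comb_mem_span f fun i => - polyOf (fun m => c (.inl (i, m)))
        convert e using 1
        linear_combination hc
      rw [h1, mul_zero, add_zero] at hc
      have hdeg : ∀ i, (polyOf (fun m : Expo 2 => c (.inl (i, m)))).totalDegree < 3 := fun i =>
        lt_of_le_of_lt (polyOf_hom _).totalDegree_le (by norm_num)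
      obtain ⟨e0, e1, e2⟩ := hf.syz_low hom hc (hdeg 0) (hdeg 1) (hdeg 2)
      have e : ∀ i, polyOf (fun m : Expo 2 => c (.inl (i, m))) = 0 := by
        intro i
        fin_cases i
        exacts [e0, e1, e2]
      funext s
      rcases s with ⟨i, m⟩ | m
      · rw [← coeff_polyOf (fun m : Expo 2 => c (.inl (i, m))) m, e, coeff_zero, Pi.zero_apply]
      · rw [← coeff_polyOf (fun m : Expo 1 => c (.inr m)) m, h1, coeff_zero, Pi.zero_apply]
    obtain ⟨c, hc⟩ := family_surjective (quinticFamily_hom (pt 0) (pt 1) hom) hcard hinj hp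
    rw [quinticFamily_sum, ← hL] at hc
    refine ⟨_, polyOf_hom fun m => c (.inr m), ?_⟩
    have e := comb_mem_span f fun i => polyOf (fun m => c (.inl (i, m)))
    convert e using 1
    linear_combination -hc
  · obtain ⟨c, rfl⟩ : ∃ c, q = C c :=
      ⟨_, totalDegree_eq_zero_iff_eq_C.1 (Nat.le_zero.1 hq.totalDegree_le)⟩
    have h0 := (hφ _ ((hLhom.pow 6).mul hq)).2 hqJ
    rw [mul_comm, ← smul_eq_C_mul, map_smul, smul_eq_mul] at h0
    rw [(mul_eq_zero.1 h0).resolve_right hF', C_0]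
  · refine ⟨C (φ p / φ (L ^ 6)), isHomogeneous_C _ _, ?_⟩
    refine (hφ _ (hp.sub ((hLhom.pow 6).mul (isHomogeneous_C _ _)))).1 ?_
    rw [mul_comm, ← smul_eq_C_mul, map_sub, map_smul, smul_eq_mul, div_mul_cancel₀ _ hF', sub_self]

/-! ### The strong Lefschetz property -/

/-- A linear form inducing isomorphisms `A_i → A_{6-i}` for `i ≤ 2` is a strong Lefschetz
element. -/
theorem hasSLPQuot_of_iso {I : Ideal (MvPolynomial (Fin 3) ℂ)} {L : MvPolynomial (Fin 3) ℂ}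
    (hL : L.IsHomogeneous 1)
    (hinj : ∀ i ≤ 2, ∀ q : MvPolynomial (Fin 3) ℂ, q.IsHomogeneous i → L ^ (6 - 2 * i) * q ∈ I →
      q ∈ I)
    (hsurj : ∀ i ≤ 2, ∀ p : MvPolynomial (Fin 3) ℂ, p.IsHomogeneous (6 - i) →
      ∃ q : MvPolynomial (Fin 3) ℂ, q.IsHomogeneous i ∧ p - L ^ (6 - 2 * i) * q ∈ I) :
    hasSLPQuot I 6 := by
  refine ⟨L, hL, fun i k hik => ?_⟩
  rcases Nat.eq_zero_or_pos k with rfl | hk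
  · left
    intro v _ hv
    simpa using hv
  by_cases hle : i + (i + k) ≤ 6
  · left
    rintro _ ⟨q, hq, rfl⟩ hv
    change Ideal.Quotient.mk I L ^ k * Ideal.Quotient.mk I q = 0 at hv
    change Ideal.Quotient.mk I q = 0
    rw [← map_pow, ← map_mul, Ideal.Quotient.eq_zero_iff_mem] at hv
    rw [Ideal.Quotient.eq_zero_iff_mem]
    refine hinj i (by omega) q hq ?_
    rw [show 6 - 2 * i = (6 - 2 * i - k) + k by omega, pow_add, mul_assoc]
    exact Ideal.mul_mem_left _ _ hv
  · right
    rintro _ ⟨p, hp, rfl⟩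
    -- With `e = 6 - (i + k)` the target class is `L ^ (6 - 2e) q`, and `6 - 2e ≥ k`.
    obtain ⟨q, hq, hpq⟩ := hsurj (6 - (i + k)) (by omega) p
      (by rw [show 6 - (6 - (i + k)) = i + k by omega]; exact hp)
    obtain ⟨t, ht⟩ : ∃ t, 6 - 2 * (6 - (i + k)) = k + t :=
      ⟨6 - 2 * (6 - (i + k)) - k, by omega⟩
    refine ⟨Ideal.Quotient.mk I (L ^ t * q), ⟨L ^ t * q, ?_, rfl⟩, ?_⟩
    · have h := (hL.pow t).mul hq
      rw [show 1 * t + (6 - (i + k)) = i by omega] at h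
      exact h
    · change Ideal.Quotient.mk I L ^ k * Ideal.Quotient.mk I (L ^ t * q) = Ideal.Quotient.mk I p
      rw [← map_pow, ← map_mul, eq_comm, Ideal.Quotient.eq, ← mul_assoc, ← pow_add, ← ht]
      exact hpq

/-- **Proposition.** For any smooth quartic curve `V(f) ⊂ ℙ^2`, the Milnor algebra
`M(f) = R/J(f)` (an Artinian Gorenstein algebra of socle degree `3(4-2) = 6`)
has the Strong Lefschetz Property. -/
theorem milnor_algebra_smooth_quartic_curve_SLP
    (f : MvPolynomial (Fin 3) ℂ) (hf : f.IsHomogeneous 4)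
    (hsm : ∀ x : Fin 3 → ℂ, x ≠ 0 → ∃ i : Fin 3, eval x (pderiv i f) ≠ 0) :
    hasSLPQuot (jacobianIdeal f) 6 := by
  obtain ⟨N, hN⟩ := exists_powIn hsm
  have hom : ∀ i, (pderiv i f).IsHomogeneous 3 := fun i => hf.pderiv
  obtain ⟨D, hD0, hD⟩ := lefschetz_two_point hom hN
  obtain ⟨E, hE0, hE⟩ := lefschetz_four_point hom hN
  obtain ⟨pt, hpt⟩ : ∃ pt : Fin 2 → ℂ, eval pt (D * E) ≠ 0 := by
    by_contra! h
    exact mul_ne_zero hD0 hE0 (MvPolynomial.funext fun pt => by rw [h, map_zero])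
  rw [map_mul] at hpt
  obtain ⟨i2, s2⟩ := hD pt (left_ne_zero_of_mul hpt)
  obtain ⟨i1, s1, i0, s0⟩ := hE pt (right_ne_zero_of_mul hpt)
  refine hasSLPQuot_of_iso (line_hom (pt 0) (pt 1)) (fun i hi q hq hqJ => ?_) fun i hi p hp => ?_
  · have hq0 : q = 0 := by
      interval_cases i
      exacts [i0 q hq hqJ, i1 q hq hqJ, i2 q hq hqJ]
    rw [hq0]
    exact zero_mem _
  · interval_cases i
    exacts [s0 p hp, s1 p hp, s2 p hp]
end

section
/- For every n ≥ 1 and d ≥ 1 there exists a nonempty Zariski-open subset U'_d of R_d = ℂ[x_0,…,x_n]_d such that for every f ∈ U'_d one has dim_ℂ A(f)_k = C(n+k, n) for all 0 ≤ k ≤ d/2 and dim_ℂ A(f)_k = C(n+d−k, n) for all d/2 < k ≤ d; equivalently, Ann(f)_k = 0 for all k ≤ d/2. -/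
/-!
Write `c_γ(f) = γ! · coeff γ f` (`dcoeff`). In these coordinates `∂^α` is the shift
`c_γ(∂^α f) = c_{γ+α}(f)`, so for a form `f` of degree `d` the annihilator `Ann(f)_k` is the kernel
of the catalecticant matrix `(c_{γ+α}(f))` with `|γ| = d - k`, `|α| = k` (`mem_ker_DopL_iff`), and
`dim A(f)_k` is its rank (`finrank_Apiece`). The catalecticants in degrees `k` and `d - k` are
transposes of each other, so everything follows from `Ann(f)_k = 0` for `k ≤ d/2`. As
`X_0^(m-k) Ann(f)_k ⊆ Ann(f)_m`, it is enough to treat `m = ⌊d/2⌋` (`ann_eq_bot`).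

With `d = 2m + ε`, `ε ∈ {0, 1}`, the open set is the nonvanishing locus of the maximal minor
`det (c_{γ + ε e_0 + α}(f))`, `|γ| = |α| = m` (`minorPoly`). It is nonempty: let `f₀` be the form
with `c_γ(f₀) = ∑_p p^γ`, summed over the points of the grid `{1, …, m+1}^(n+1)`. Its minor is the
Gram matrix `∑_p p_0^ε v_p v_pᵀ` with `v_p = (p^α)_α`, which is positive definite because a form of
degree `m` vanishing on the grid is zero (`det_momentForm_ne_zero`).
-/

open MvPolynomial Module

/-- The differential operator `∂^α` on `ℂ[x_0,…,x_{N-1}]` given by a multi-index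
`α : Fin N → ℕ`. -/
noncomputable def pd {N : ℕ} (α : Fin N → ℕ) :
    Module.End ℂ (MvPolynomial (Fin N) ℂ) :=
  (List.ofFn fun i =>
    ((MvPolynomial.pderiv (R := ℂ) i).toLinearMap :
      Module.End ℂ (MvPolynomial (Fin N) ℂ)) ^ (α i)).prod

/-- Apolarity action: the `ℂ`-linear map `q ↦ q(f)` sending a differential operator
`q ∈ Q = ℂ[X_0,…,X_n]` (a polynomial in the `∂/∂x_i`) to its action on `f`.  It sends
the monomial `X^α` to `∂^α f`. -/
noncomputable def DopL {N : ℕ} (f : MvPolynomial (Fin N) ℂ) :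
    MvPolynomial (Fin N) ℂ →ₗ[ℂ] MvPolynomial (Fin N) ℂ :=
  (MvPolynomial.basisMonomials (Fin N) ℂ).constr ℂ (fun α => pd (fun i => α i) f)

/-- The degree-`k` graded piece `A(f)_k = Q_k / Ann(f)_k` of the Artinian Gorenstein
algebra `A(f) = Q/Ann(f)` associated to `f` by Macaulay–Matlis duality. -/
noncomputable abbrev Apiece {N : ℕ} (f : MvPolynomial (Fin N) ℂ) (k : ℕ) :=
  (homogeneousSubmodule (Fin N) ℂ k) ⧸
    (Submodule.comap (homogeneousSubmodule (Fin N) ℂ k).subtype (LinearMap.ker (DopL f)))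

/-! ### Divided power coefficients and the apolarity action -/

/-- The exponents of the monomials of degree `k` in `N` variables. -/
abbrev Mon (N k : ℕ) := {α : Fin N →₀ ℕ // α ∈ (Finset.univ : Finset (Fin N)).finsuppAntidiag k}

lemma mem_mon {N k : ℕ} (α : Fin N →₀ ℕ) :
    α ∈ (Finset.univ : Finset (Fin N)).finsuppAntidiag k ↔ α.degree = k := by
  simp [Finset.mem_finsuppAntidiag, Finsupp.degree_eq_sum]

lemma Mon.degree_eq {N k : ℕ} (α : Mon N k) : α.1.degree = k := (mem_mon _).1 α.2

lemma card_mon (n k : ℕ) : Fintype.card (Mon (n + 1) k) = Nat.choose (n + k) n := by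
  rw [Fintype.card_coe, Finset.card_finsuppAntidiag_nat_eq_choose]
  simp only [Finset.card_univ, Fintype.card_fin]
  rw [show n + 1 + k - 1 = n + k by omega, Nat.choose_symm_add]

/-- The coefficient of `f` at `γ` in divided powers: `γ! · coeff γ f`. -/
noncomputable def dcoeff {N : ℕ} (γ : Fin N →₀ ℕ) :
    MvPolynomial (Fin N) ℂ →ₗ[ℂ] ℂ :=
  (∏ i, ((γ i).factorial : ℂ)) • lcoeff ℂ γ

lemma dcoeff_apply {N : ℕ} (γ : Fin N →₀ ℕ) (f : MvPolynomial (Fin N) ℂ) :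
    dcoeff γ f = (∏ i, ((γ i).factorial : ℂ)) * f.coeff γ := rfl

lemma prod_factorial_ne_zero {N : ℕ} (γ : Fin N →₀ ℕ) :
    (∏ i, ((γ i).factorial : ℂ)) ≠ 0 :=
  Finset.prod_ne_zero_iff.2 fun i _ => by exact_mod_cast (γ i).factorial_ne_zero

lemma ext_dcoeff {N : ℕ} {f g : MvPolynomial (Fin N) ℂ}
    (h : ∀ γ, dcoeff γ f = dcoeff γ g) : f = g := by
  ext γ
  exact mul_left_cancel₀ (prod_factorial_ne_zero γ) (h γ)

lemma dcoeff_pderiv {N : ℕ} (i : Fin N) (γ : Fin N →₀ ℕ) (f : MvPolynomial (Fin N) ℂ) :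
    dcoeff γ (pderiv i f) = dcoeff (γ + Finsupp.single i 1) f := by
  rw [dcoeff_apply, dcoeff_apply, coeff_pderiv,
    ← Finset.mul_prod_erase _ (fun j => ((γ j).factorial : ℂ)) (Finset.mem_univ i),
    ← Finset.mul_prod_erase _
      (fun j => (((γ + Finsupp.single i 1 : Fin N →₀ ℕ) j).factorial : ℂ)) (Finset.mem_univ i)]
  have h : ∏ j ∈ Finset.univ.erase i, (((γ + Finsupp.single i 1 : Fin N →₀ ℕ) j).factorial : ℂ)
      = ∏ j ∈ Finset.univ.erase i, ((γ j).factorial : ℂ) :=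
    Finset.prod_congr rfl fun j hj => by
      have : j ≠ i := Finset.ne_of_mem_erase hj
      simp [this.symm]
  rw [h]
  simp only [Finsupp.add_apply, Finsupp.single_eq_same, Nat.factorial_succ]
  push_cast
  ring

lemma dcoeff_pderiv_pow {N : ℕ} (i : Fin N) (a : ℕ) (γ : Fin N →₀ ℕ)
    (f : MvPolynomial (Fin N) ℂ) :
    dcoeff γ ((((pderiv (R := ℂ) i).toLinearMap :
      Module.End ℂ (MvPolynomial (Fin N) ℂ)) ^ a) f) = dcoeff (γ + Finsupp.single i a) f := by
  induction a generalizing f with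
  | zero => simp
  | succ a ih =>
    rw [pow_succ, Module.End.mul_apply, ih]
    refine (dcoeff_pderiv i _ f).trans ?_
    rw [add_assoc, ← Finsupp.single_add]

lemma dcoeff_list_prod {N : ℕ} (α : Fin N → ℕ) (L : List (Fin N)) (γ : Fin N →₀ ℕ)
    (f : MvPolynomial (Fin N) ℂ) :
    dcoeff γ ((L.map fun i => ((pderiv (R := ℂ) i).toLinearMap :
      Module.End ℂ (MvPolynomial (Fin N) ℂ)) ^ (α i)).prod f)
      = dcoeff (γ + (L.map fun i => Finsupp.single i (α i)).sum) f := by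
  induction L generalizing γ with
  | nil => simp
  | cons i L ih =>
    rw [List.map_cons, List.prod_cons, Module.End.mul_apply, dcoeff_pderiv_pow, ih,
      List.map_cons, List.sum_cons, add_assoc]

/-- In divided power coefficients, `∂^α` is the shift by `α`. -/
lemma dcoeff_pd {N : ℕ} (α γ : Fin N →₀ ℕ) (f : MvPolynomial (Fin N) ℂ) :
    dcoeff γ (pd (fun i => α i) f) = dcoeff (γ + α) f := by
  rw [pd, List.ofFn_eq_map, dcoeff_list_prod, ← List.ofFn_eq_map, List.sum_ofFn,
    Finsupp.univ_sum_single]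

lemma dcoeff_DopL_monomial {N : ℕ} (f : MvPolynomial (Fin N) ℂ) (α γ : Fin N →₀ ℕ) (r : ℂ) :
    dcoeff γ (DopL f (monomial α r)) = r * dcoeff (γ + α) f := by
  have : monomial α r = r • (basisMonomials (Fin N) ℂ) α := by simp [smul_monomial]
  rw [this, map_smul, map_smul, DopL, Basis.constr_basis, dcoeff_pd, smul_eq_mul]

/-- Multiplying the operator by `X^δ` shifts divided power coefficients by `δ`. -/
lemma dcoeff_DopL_mul {N : ℕ} (f q : MvPolynomial (Fin N) ℂ) (δ γ : Fin N →₀ ℕ) :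
    dcoeff γ (DopL f (q * monomial δ 1)) = dcoeff (γ + δ) (DopL f q) := by
  induction q using MvPolynomial.induction_on' with
  | monomial α r =>
    rw [monomial_mul, dcoeff_DopL_monomial, dcoeff_DopL_monomial, mul_one, add_assoc,
      add_comm δ α]
  | add p q hp hq => rw [add_mul, map_add, map_add, map_add, map_add, hp, hq]

/-- A homogeneous polynomial is the sum of its terms over `Mon N k`. -/
lemma eq_sum_mon {N k : ℕ} {q : MvPolynomial (Fin N) ℂ} (hq : q.IsHomogeneous k) :
    q = ∑ α : Mon N k, monomial α.1 (q.coeff α.1) := by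
  classical
  rw [Finset.sum_coe_sort (Finset.univ.finsuppAntidiag k) (fun α => monomial α (q.coeff α))]
  ext γ
  rw [coeff_sum]
  simp only [coeff_monomial, Finset.sum_ite_eq', mem_mon]
  split_ifs with h
  · rfl
  · exact hq.coeff_eq_zero h

lemma dcoeff_DopL_of_homogeneous {N k : ℕ} (f : MvPolynomial (Fin N) ℂ)
    {q : MvPolynomial (Fin N) ℂ} (hq : q.IsHomogeneous k) (γ : Fin N →₀ ℕ) :
    dcoeff γ (DopL f q) = ∑ α : Mon N k, dcoeff (γ + α.1) f * q.coeff α.1 := by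
  conv_lhs => rw [eq_sum_mon hq]
  rw [map_sum, map_sum]
  exact Finset.sum_congr rfl fun α _ => by rw [dcoeff_DopL_monomial, mul_comm]

/-! ### Catalecticant matrices -/

/-- The catalecticant matrix of `f` with rows of degree `j` and columns of degree `k`. -/
noncomputable def catalecticant {N : ℕ} (f : MvPolynomial (Fin N) ℂ) (j k : ℕ) :
    Matrix (Mon N j) (Mon N k) ℂ :=
  Matrix.of fun γ α => dcoeff (γ.1 + α.1) f

lemma catalecticant_transpose {N : ℕ} (f : MvPolynomial (Fin N) ℂ) (j k : ℕ) :
    (catalecticant f j k).transpose = catalecticant f k j := by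
  ext α γ
  simp [catalecticant, add_comm]

/-- The coordinates of a form of degree `k` in the monomial basis. -/
noncomputable def coords (N k : ℕ) :
    homogeneousSubmodule (Fin N) ℂ k →ₗ[ℂ] (Mon N k → ℂ) :=
  LinearMap.pi fun α => lcoeff ℂ α.1 ∘ₗ (homogeneousSubmodule (Fin N) ℂ k).subtype

lemma coords_apply {N k : ℕ} (q : homogeneousSubmodule (Fin N) ℂ k) (α : Mon N k) :
    coords N k q α = q.1.coeff α.1 := rfl

lemma coords_surjective (N k : ℕ) : Function.Surjective (coords N k) := by
  classical
  intro v
  refine ⟨⟨∑ α : Mon N k, monomial α.1 (v α), Submodule.sum_mem _ fun α _ => ?_⟩, ?_⟩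
  · exact isHomogeneous_monomial _ α.degree_eq
  · ext β
    rw [coords_apply, coeff_sum]
    simp [coeff_monomial]

/-- For a form `f` of degree `j + k`, the annihilator in degree `k` is the kernel of the
catalecticant. -/
lemma mem_ker_DopL_iff {N j k : ℕ} {f : MvPolynomial (Fin N) ℂ} (hf : f.IsHomogeneous (j + k))
    (q : homogeneousSubmodule (Fin N) ℂ k) :
    DopL f q.1 = 0 ↔ (catalecticant f j k).mulVec (coords N k q) = 0 := by
  have key (γ : Fin N →₀ ℕ) := dcoeff_DopL_of_homogeneous f
    ((mem_homogeneousSubmodule k q.1).1 q.2) γ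
  constructor
  · intro h
    ext γ
    have := key γ.1
    rw [h, map_zero] at this
    exact this.symm
  · intro h
    refine ext_dcoeff fun γ => ?_
    rw [map_zero]
    by_cases hγ : γ.degree = j
    · rw [key]
      exact congrFun h ⟨γ, (mem_mon γ).2 hγ⟩
    · rw [key]
      refine Finset.sum_eq_zero fun α _ => ?_
      rw [dcoeff_apply, hf.coeff_eq_zero, mul_zero, zero_mul]
      rw [map_add, α.degree_eq]
      omega

lemma finrank_Apiece {N j k : ℕ} {f : MvPolynomial (Fin N) ℂ} (hf : f.IsHomogeneous (j + k)) :
    Module.finrank ℂ (Apiece f k) = (catalecticant f j k).rank := by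
  have hker : Submodule.comap (homogeneousSubmodule (Fin N) ℂ k).subtype (LinearMap.ker (DopL f))
      = LinearMap.ker ((catalecticant f j k).mulVecLin ∘ₗ coords N k) := by
    ext q
    exact mem_ker_DopL_iff hf q
  rw [(Submodule.quotEquivOfEq _ _ hker).finrank_eq, (LinearMap.quotKerEquivRange _).finrank_eq,
    LinearMap.range_comp_of_range_eq_top _ (LinearMap.range_eq_top.2 (coords_surjective N k))]
  rfl

/-- If no operator of degree `k` kills `f`, the catalecticant has full column rank. -/
lemma rank_catalecticant {N j k : ℕ} {f : MvPolynomial (Fin N) ℂ} (hf : f.IsHomogeneous (j + k))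
    (h : homogeneousSubmodule (Fin N) ℂ k ⊓ LinearMap.ker (DopL f) = ⊥) :
    (catalecticant f j k).rank = Fintype.card (Mon N k) := by
  have hinj : LinearMap.ker (catalecticant f j k).mulVecLin = ⊥ := by
    refine (Submodule.eq_bot_iff _).2 fun v hv => ?_
    obtain ⟨q, rfl⟩ := coords_surjective N k v
    have hq : q.1 ∈ homogeneousSubmodule (Fin N) ℂ k ⊓ LinearMap.ker (DopL f) :=
      ⟨q.2, (mem_ker_DopL_iff hf q).2 hv⟩
    rw [h, Submodule.mem_bot] at hq
    rw [show q = 0 from Subtype.ext hq, map_zero]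
  rw [Matrix.rank, LinearMap.finrank_range_of_inj (LinearMap.ker_eq_bot.1 hinj),
    Module.finrank_fintype_fun_eq_card]

/-! ### The maximal minor -/

/-- The square submatrix of a catalecticant whose rows are the degree `m` exponents shifted
by `ε e_0`; for a form of degree `2m + ε` with `ε ≤ 1` its determinant is a maximal minor. -/
noncomputable def minorMatrix {n : ℕ} (f : MvPolynomial (Fin (n + 1)) ℂ) (m ε : ℕ) :
    Matrix (Mon (n + 1) m) (Mon (n + 1) m) ℂ :=
  Matrix.of fun γ α => dcoeff (γ.1 + Finsupp.single 0 ε + α.1) f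

/-- The determinant of `minorMatrix`, as a polynomial in the coefficients of `f`. -/
noncomputable def minorPoly (n m ε : ℕ) : MvPolynomial (Fin (n + 1) →₀ ℕ) ℂ :=
  Matrix.det (Matrix.of fun γ α : Mon (n + 1) m =>
    C (∏ i, (((γ.1 + Finsupp.single 0 ε + α.1 : Fin (n + 1) →₀ ℕ) i).factorial : ℂ)) *
      X (γ.1 + Finsupp.single 0 ε + α.1))

lemma eval_minorPoly {n : ℕ} (f : MvPolynomial (Fin (n + 1)) ℂ) (m ε : ℕ) :
    eval (fun α => f.coeff α) (minorPoly n m ε) = (minorMatrix f m ε).det := by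
  rw [minorPoly, RingHom.map_det]
  congr 1
  ext γ α
  simp [minorMatrix, dcoeff_apply]

/-- Nonvanishing of the minor forces `Ann(f)_k = 0` for all `k ≤ m`. The case `k = m` is
linear algebra; smaller `k` reduce to it by multiplying with `X_0^(m-k)`. -/
lemma ann_eq_bot {n m ε k : ℕ} {f : MvPolynomial (Fin (n + 1)) ℂ}
    (hdet : (minorMatrix f m ε).det ≠ 0) (hk : k ≤ m) :
    homogeneousSubmodule (Fin (n + 1)) ℂ k ⊓ LinearMap.ker (DopL f) = ⊥ := by
  refine (Submodule.eq_bot_iff _).2 fun q ⟨hq, hq0⟩ => ?_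
  set p := q * monomial (Finsupp.single 0 (m - k)) (1 : ℂ) with hp
  have hp_hom : p.IsHomogeneous m := by
    have := ((mem_homogeneousSubmodule k q).1 hq).mul
      (isHomogeneous_monomial (d := Finsupp.single (0 : Fin (n + 1)) (m - k)) (1 : ℂ)
        (Finsupp.degree_single _ _))
    rwa [Nat.add_sub_cancel' hk] at this
  have hv : (minorMatrix f m ε).mulVec (fun α => p.coeff α.1) = 0 := by
    ext γ
    have h1 := dcoeff_DopL_of_homogeneous f hp_hom (γ.1 + Finsupp.single 0 ε)
    rw [hp, dcoeff_DopL_mul, LinearMap.mem_ker.1 hq0, map_zero] at h1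
    exact h1.symm
  have hv0 := Matrix.eq_zero_of_mulVec_eq_zero hdet hv
  have hp0 : p = 0 := by
    rw [eq_sum_mon hp_hom]
    refine Finset.sum_eq_zero fun α _ => ?_
    rw [show p.coeff α.1 = 0 from congrFun hv0 α, map_zero]
  rcases mul_eq_zero.1 hp0 with h | h
  · exact h
  · simp at h

/-! ### A form with nonvanishing minor -/

/-- The integer points of the cube `{1, …, m+1}^N`. -/
def grid (N m : ℕ) : Finset (Fin N → ℕ) := Fintype.piFinset fun _ => Finset.Icc 1 (m + 1)

/-- Power sum `∑ (p · x)^d / d!` over the points `p` of the grid: the form of degree `d` whose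
divided power coefficient at `γ` is the moment `∑ p^γ`. -/
noncomputable def momentForm (N m d : ℕ) : MvPolynomial (Fin N) ℂ :=
  ∑ γ : Mon N d, monomial γ.1
    ((∏ i, ((γ.1 i).factorial : ℂ))⁻¹ * ∑ p ∈ grid N m, ∏ i, (p i : ℂ) ^ γ.1 i)

lemma momentForm_isHomogeneous (N m d : ℕ) : (momentForm N m d).IsHomogeneous d :=
  IsHomogeneous.sum _ _ _ fun γ _ => isHomogeneous_monomial _ γ.degree_eq

lemma dcoeff_momentForm {N m d : ℕ} {γ : Fin N →₀ ℕ} (hγ : γ.degree = d) :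
    dcoeff γ (momentForm N m d) = ∑ p ∈ grid N m, ∏ i, (p i : ℂ) ^ γ i := by
  classical
  rw [dcoeff_apply, momentForm, coeff_sum]
  simp only [coeff_monomial]
  rw [Finset.sum_eq_single ⟨γ, (mem_mon γ).2 hγ⟩]
  · rw [if_pos rfl, mul_inv_cancel_left₀ (prod_factorial_ne_zero γ)]
  · intro β _ hβ
    exact if_neg fun h => hβ (Subtype.ext h)
  · simp

/-- A form of degree `m` vanishing on the grid is zero. -/
lemma eq_zero_of_grid {N m : ℕ} {q : MvPolynomial (Fin N) ℂ} (hq : q.IsHomogeneous m)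
    (h : ∀ p ∈ grid N m, eval (fun i => (p i : ℂ)) q = 0) : q = 0 := by
  classical
  refine eq_zero_of_eval_zero_at_prod_finset q
    (fun _ => (Finset.Icc 1 (m + 1)).image (Nat.cast : ℕ → ℂ)) (fun i => ?_) fun x hx => ?_
  · rw [Finset.card_image_of_injective _ Nat.cast_injective, Nat.card_Icc]
    have := (degreeOf_le_totalDegree q i).trans hq.totalDegree_le
    omega
  · simp only [Finset.mem_image] at hx
    choose p hp hpx using hx
    rw [← h p (Fintype.mem_piFinset.2 hp)]
    congr 2
    exact _root_.funext fun i => (hpx i).symm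

/-- The minor of the moment form is a Gram matrix `∑ p_0^ε v_p v_pᵀ` with positive real weights
`p_0^ε`, so a kernel vector `v` satisfies `∑ p_0^ε |q_v(p)|² = 0`, where `q_v` is the form with
coefficients `v`; hence `q_v` vanishes on the grid. -/
lemma det_momentForm_ne_zero (n m ε : ℕ) :
    (minorMatrix (momentForm (n + 1) m (2 * m + ε)) m ε).det ≠ 0 := by
  intro hdet
  obtain ⟨v, hv0, hv⟩ := Matrix.exists_mulVec_eq_zero_iff.2 hdet
  obtain ⟨q, rfl⟩ := coords_surjective (n + 1) m v
  have hq := (mem_homogeneousSubmodule m q.1).1 q.2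
  have heval (p : Fin (n + 1) → ℕ) : eval (fun i => (p i : ℂ)) q.1
      = ∑ α : Mon (n + 1) m, coords (n + 1) m q α * ∏ i, (p i : ℂ) ^ α.1 i := by
    conv_lhs => rw [eq_sum_mon hq]
    rw [map_sum]
    refine Finset.sum_congr rfl fun α _ => ?_
    rw [eval_monomial, Finsupp.prod_fintype _ _ (by simp), coords_apply]
  have hentry (γ α : Mon (n + 1) m) :
      minorMatrix (momentForm (n + 1) m (2 * m + ε)) m ε γ α
        = ∑ p ∈ grid (n + 1) m, (p 0 : ℂ) ^ ε * (∏ i, (p i : ℂ) ^ γ.1 i) *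
            ∏ i, (p i : ℂ) ^ α.1 i := by
    rw [minorMatrix, Matrix.of_apply, dcoeff_momentForm]
    · refine Finset.sum_congr rfl fun p _ => ?_
      simp only [Finsupp.add_apply, pow_add, Finset.prod_mul_distrib]
      have : ∏ i, (p i : ℂ) ^ (Finsupp.single (0 : Fin (n + 1)) ε) i = (p 0 : ℂ) ^ ε := by
        rw [Finset.prod_eq_single 0] <;> simp +contextual [eq_comm]
      rw [this]
      ring
    · rw [map_add, map_add, γ.degree_eq, α.degree_eq, Finsupp.degree_single]
      ring
  have hrow (γ : Mon (n + 1) m) : ∑ p ∈ grid (n + 1) m,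
      (p 0 : ℂ) ^ ε * (∏ i, (p i : ℂ) ^ γ.1 i) * eval (fun i => (p i : ℂ)) q.1 = 0 := by
    rw [← show _ = (0 : ℂ) from congrFun hv γ]
    simp only [Matrix.mulVec, dotProduct, hentry, heval, Finset.mul_sum, Finset.sum_mul]
    rw [Finset.sum_comm]
    refine Finset.sum_congr rfl fun α _ => Finset.sum_congr rfl fun p _ => ?_
    ring
  have hsum : ∑ p ∈ grid (n + 1) m,
      ((p 0 : ℝ) ^ ε * Complex.normSq (eval (fun i => (p i : ℂ)) q.1)) = 0 := by
    have : ∑ γ : Mon (n + 1) m, starRingEnd ℂ (coords (n + 1) m q γ) *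
        ∑ p ∈ grid (n + 1) m,
          (p 0 : ℂ) ^ ε * (∏ i, (p i : ℂ) ^ γ.1 i) * eval (fun i => (p i : ℂ)) q.1 = 0 :=
      Finset.sum_eq_zero fun γ _ => by rw [hrow, mul_zero]
    apply Complex.ofReal_injective
    rw [Complex.ofReal_zero, ← this, Complex.ofReal_sum]
    simp only [Finset.mul_sum]
    rw [Finset.sum_comm]
    refine Finset.sum_congr rfl fun p _ => ?_
    rw [Complex.ofReal_mul, Complex.normSq_eq_conj_mul_self]
    conv_lhs => rw [show starRingEnd ℂ (eval (fun i => (p i : ℂ)) q.1) =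
      ∑ α : Mon (n + 1) m, starRingEnd ℂ (coords (n + 1) m q α) * ∏ i, (p i : ℂ) ^ α.1 i by
        rw [heval]; simp]
    rw [Finset.sum_mul, Finset.mul_sum]
    refine Finset.sum_congr rfl fun γ _ => ?_
    push_cast
    ring
  refine hv0 ?_
  have hq0 : q.1 = 0 := by
    refine eq_zero_of_grid hq fun p hp => ?_
    have h0 := (Finset.sum_eq_zero_iff_of_nonneg fun p _ =>
      mul_nonneg (pow_nonneg (Nat.cast_nonneg _) _) (Complex.normSq_nonneg _)).1 hsum p hp
    have hp0 : 1 ≤ p 0 := (Finset.mem_Icc.1 (Fintype.mem_piFinset.1 hp 0)).1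
    have : (p 0 : ℝ) ^ ε ≠ 0 := pow_ne_zero _ (by exact_mod_cast (by omega : p 0 ≠ 0))
    exact Complex.normSq_eq_zero.1 ((mul_eq_zero.1 h0).resolve_left this)
  rw [show q = 0 from Subtype.ext hq0, map_zero]

/-- **Proposition (after Z. Wang).** For every `n ≥ 1` and `d ≥ 1` there is a nonempty
Zariski-open subset `U'_d` of `R_d` (given by the nonvanishing of a polynomial `P` in the
coefficients, which is nonzero at some homogeneous `f₀` of degree `d`) such that for every
`f ∈ U'_d` one has `Ann(f)_k = 0` and `dim A(f)_k = C(n+k,n)` for `0 ≤ k ≤ d/2`, and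
`dim A(f)_k = C(n+d-k,n)` for `d/2 < k ≤ d`. -/
theorem generic_gorenstein_hilbert_function
    {n d : ℕ} (hn : 1 ≤ n) (hd : 1 ≤ d) :
    ∃ P : MvPolynomial (Fin (n + 1) →₀ ℕ) ℂ,
      (∃ f₀ : MvPolynomial (Fin (n + 1)) ℂ, f₀.IsHomogeneous d ∧
        eval (fun α => f₀.coeff α) P ≠ 0) ∧
      ∀ f : MvPolynomial (Fin (n + 1)) ℂ, f.IsHomogeneous d →
        eval (fun α => f.coeff α) P ≠ 0 →
          (∀ k : ℕ, 2 * k ≤ d →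
            homogeneousSubmodule (Fin (n + 1)) ℂ k ⊓ LinearMap.ker (DopL f) = ⊥) ∧
          (∀ k : ℕ, 2 * k ≤ d →
            Module.finrank ℂ (Apiece f k) = Nat.choose (n + k) n) ∧
          (∀ k : ℕ, d < 2 * k → k ≤ d →
            Module.finrank ℂ (Apiece f k) = Nat.choose (n + (d - k)) n) := by
  refine ⟨minorPoly n (d / 2) (d % 2), ⟨momentForm (n + 1) (d / 2) d,
    momentForm_isHomogeneous _ _ _, ?_⟩, fun f hf hP => ?_⟩
  · have := det_momentForm_ne_zero n (d / 2) (d % 2)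
    rw [Nat.div_add_mod] at this
    rwa [eval_minorPoly]
  · rw [eval_minorPoly] at hP
    have hann (k : ℕ) (hk : 2 * k ≤ d) :
        homogeneousSubmodule (Fin (n + 1)) ℂ k ⊓ LinearMap.ker (DopL f) = ⊥ :=
      ann_eq_bot hP (by omega)
    refine ⟨hann, fun k hk => ?_, fun k hk hkd => ?_⟩
    · have hf' : f.IsHomogeneous (d - k + k) := by rwa [Nat.sub_add_cancel (by omega)]
      rw [finrank_Apiece hf', rank_catalecticant hf' (hann k hk), card_mon]
    · have hf' : f.IsHomogeneous (d - k + k) := by rwa [Nat.sub_add_cancel hkd]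
      -- The rank in degree `k` equals the rank of the transpose, in degree `d - k < d / 2`.
      rw [finrank_Apiece hf', ← Matrix.rank_transpose, catalecticant_transpose,
        rank_catalecticant (by rwa [Nat.add_sub_cancel' hkd]) (hann (d - k) (by omega)), card_mon]
end
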